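/- There exists an absolute constant c > 0 such that the following holds. For any integers O ≥ S ≥ 5 and A ≥ 3, any horizon H with H ≥ 4·log₂ S, any α ∈ (0, 1/(5H)], and any ε ∈ (0, 0.01], there exists a finite family ℳ of finite episodic POMDPs with horizon H, with |𝒮| ≤ S, |𝒪| ≤ O, |𝒜| = A, each of which is single-step (m = 1) α-revealing, such that: for every T ∈ ℕ and every T-episode algorithm 𝔄 whose output satisfies ℙ_M^𝔄( V_M⋆ − V_M(π^out) < ε ) ≥ 3/4 for every M ∈ ℳ, one must have T ≥ c · min{ S·O^{1/2}·A·H/(α²ε²), S·A^{H/2}·H/ε² }. -/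

import Mathlib

/-!
The family consists of a reference POMDP and of POMDPs with a hidden combination lock.

*Construction.* There are `2 ^ d` fully observed states outside the lock (`S / 4 ≤ 2 ^ d`), where
the first `d` actions spell out a leaf, plus a good and a bad lock state. A key consists of a leaf,
an entry time, an entry action and a code in `A ^ H`. Entering the lock as the key says leads to the
good state with probability `16 ε`, entering otherwise leads to the bad one, and the good state
turns bad as soon as an action departs from the code. Inside the lock the observation is a pair in
`Fin k × Bool`, with `k` of order `O`: uniform in the bad state, and in the good state tilted by
`3 α` along an unknown sign pattern `μ : Fin k → Bool`. At the last step the tilt is total and public,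
and it alone carries the reward; staying outside is worth `1 / 2 + 4 ε`. The tilt makes the emission
matrix left invertible with norm at most `1 / α` (`Hard.isRevealing_model`). In the reference POMDP
the good state is unreachable, so an `ε`-optimal policy stays outside with probability above `3 / 4`;
with a key, an `ε`-optimal policy does so with probability below `1 / 4`
(`Hard.outside_of_reference`, `Hard.outside_of_secret`).

*Information.* For a fixed key, compare the reference law of the transcript with its uniform
mixture over `μ`. In one episode the product of the likelihood ratios of `μ` and `ν`, discounted by
the exponential of `4 (16 ε) ^ 2` times a weighted count of the times at which the history was
consistent with the key, has mean at most `1` (`Frame.sum_pathW_lik_mul_lik`); the weight is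
`9 α ^ 2 (corr μ ν)⁺` before the last step and `1` at the last step. Hence, with the likelihood
ratios stopped once the totals of the two counts exceed budgets `m` and `m'`, the second moment of
the mixture is bounded by the average over `μ, ν` of
`exp (4 (16 ε) ^ 2 (9 α ^ 2 (corr μ ν)⁺ (m + H) + m' + 1))`. As `corr μ ν` is subgaussian of scale
`1 / √k`, this is at most `3 / 2` when `m` is of order `√O / (α ^ 2 ε ^ 2)` and `m'` of order
`1 / ε ^ 2` (`Hard.sum_exp_pos_corr`, `mixture_contradiction`).

*Counting.* In one episode at most one entry is tried, and then the codes still consistent shrink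
by the factor `A` in each step. Averaged over the keys, the first count is therefore of order
`1 / (S A H)`, and the second one of order `A ^ (- H / 2) / (S H)` (`Hard.sum_cnt_le`,
`Hard.sum_cnt_last`). If `T` is below the claimed bound, Markov's inequality yields a key for which the
budgets are rarely exceeded (`exists_rarely_exceeded`), and the algorithm cannot succeed both on the
reference and on all POMDPs with this key (`Hard.no_algorithm`).
-/

open Finset

noncomputable section

/-- A finite episodic POMDP with horizon `H`, latent state space `S`, observation space `O`,
action space `A`.  Steps are indexed by `1, …, H` (paper convention). -/
structure POMDP (S O A : Type) [Fintype S] [Fintype O] [Fintype A] (H : ℕ) where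
  init : S → ℝ
  init_nonneg : ∀ s, 0 ≤ init s
  init_sum : ∑ s, init s = 1
  trans : ℕ → S → A → S → ℝ
  trans_nonneg : ∀ h s a s', 0 ≤ trans h s a s'
  trans_sum : ∀ h s a, ∑ s', trans h s a s' = 1
  emit : ℕ → S → O → ℝ
  emit_nonneg : ∀ h s o, 0 ≤ emit h s o
  emit_sum : ∀ h s, ∑ o, emit h s o = 1
  reward : ℕ → O → A → ℝ
  reward_nonneg : ∀ h o a, 0 ≤ reward h o a
  reward_le_one : ∀ h o a, reward h o a ≤ 1
  reward_total : ∀ τ : Fin H → O × A, ∑ h : Fin H, reward (h.1 + 1) (τ h).1 (τ h).2 ≤ 1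

namespace POMDP

variable {S O A : Type} [Fintype S] [Fintype O] [Fintype A] {H : ℕ}

/-- `emitActProb M m h s ω a` is the probability `ℙ_M(o_{h:h+m−1} = ω | s_h = s,
a_{h:h+m−2} = a)` of observing the sequence `ω ∈ 𝒪^m` when the latent state at (1-based)
step `h` is `s` and the action sequence `a ∈ 𝒜^{m−1}` is executed. -/
def emitActProb (M : POMDP S O A H) : (m : ℕ) → ℕ → S → (Fin m → O) → (Fin (m - 1) → A) → ℝ
  | 0, _, _, _, _ => 1
  | 1, h, s, ω, _ => M.emit h s (ω 0)
  | m + 2, h, s, ω, a =>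
    M.emit h s (ω 0) *
      ∑ s' : S, M.trans h s (a ⟨0, Nat.succ_pos m⟩) s' *
        emitActProb M (m + 1) (h + 1) s' (fun i => ω i.succ) (fun i => a i.succ)

/-- The `m`-step emission–action matrix `𝕄_{h,m}` (`h` is the 1-based step index). -/
def emitActMatrix (M : POMDP S O A H) (h m : ℕ) :
    Matrix ((Fin m → O) × (Fin (m - 1) → A)) S ℝ :=
  Matrix.of fun p s => M.emitActProb m h s p.1 p.2

/-- The set of columns of the step-(h−1) transition matrix `𝕋_{h−1}`
(the single column `μ₁` when `h = 1`). -/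
def stepCols (M : POMDP S O A H) (h : ℕ) : Set (S → ℝ) :=
  if h = 1 then {fun s => M.init s}
  else {c | ∃ s' a', c = fun s => M.trans (h - 1) s' a' s}

/-- `B` is a generalized left inverse of `𝕄_{h,m}`, i.e. `B · 𝕄_{h,m} · 𝕋_{h−1} = 𝕋_{h−1}`. -/
def IsGenLeftInv (M : POMDP S O A H) (h m : ℕ)
    (B : Matrix S ((Fin m → O) × (Fin (m - 1) → A)) ℝ) : Prop :=
  ∀ c ∈ M.stepCols h, (B * M.emitActMatrix h m).mulVec c = c

end POMDP

/-- The star-norm `‖x‖_* = (Σ_a (Σ_ω |x(ω,a)|)²)^{1/2}`. -/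
def starNorm {ι κ : Type} [Fintype ι] [Fintype κ] (x : ι × κ → ℝ) : ℝ :=
  Real.sqrt (∑ a : κ, (∑ ω : ι, |x (ω, a)|) ^ 2)

/-- The `(*→1)`-operator norm `‖B‖_{*→1} = max_{‖x‖_* ≤ 1} ‖Bx‖₁`. -/
def opNormStarOne {S ι κ : Type} [Fintype S] [Fintype ι] [Fintype κ]
    (B : Matrix S (ι × κ) ℝ) : ℝ :=
  sSup {y | ∃ x : ι × κ → ℝ, starNorm x ≤ 1 ∧ y = ∑ s, |B.mulVec x s|}

/-- The `(1→1)`-operator norm `‖B‖_{1→1} = max_{‖y‖₁ ≤ 1} ‖By‖₁`. -/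
def opNormOneOne {ι₁ ι₂ : Type} [Fintype ι₁] [Fintype ι₂] (B : Matrix ι₁ ι₂ ℝ) : ℝ :=
  sSup {y | ∃ v : ι₂ → ℝ, (∑ i, |v i|) ≤ 1 ∧ y = ∑ j, |B.mulVec v j|}

namespace POMDP
variable {S O A : Type} [Fintype S] [Fintype O] [Fintype A] {H : ℕ}

/-- `M` is `m`-step `α`-revealing. -/
def IsRevealing (M : POMDP S O A H) (m : ℕ) (α : ℝ) : Prop :=
  ∀ h ∈ Finset.Icc 1 (H - m + 1),
    ∃ B : Matrix S ((Fin m → O) × (Fin (m - 1) → A)) ℝ,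
      M.IsGenLeftInv h m B ∧ opNormStarOne B ≤ 1 / α

end POMDP

/-- A history-dependent policy: a distribution over actions for every (history, observation). -/
structure Policy (O A : Type) [Fintype A] where
  act : List (O × A) → O → A → ℝ
  act_nonneg : ∀ τ o a, 0 ≤ act τ o a
  act_sum : ∀ τ o, ∑ a, act τ o a = 1

namespace POMDP
variable {S O A : Type} [Fintype S] [Fintype O] [Fintype A] {H : ℕ}

/-- The probability `ℙ_M^π(τ)` of a full trajectory `τ = (o_1,a_1,…,o_H,a_H)`. -/
def trajProb (M : POMDP S O A H) (π : Policy O A) (τ : Fin H → O × A) : ℝ :=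
  ∑ s : Fin H → S, ∏ h : Fin H,
    (if h.1 = 0 then M.init (s h)
     else
       M.trans h.1 (s ⟨h.1 - 1, Nat.lt_of_le_of_lt (Nat.sub_le _ _) h.2⟩)
         (τ ⟨h.1 - 1, Nat.lt_of_le_of_lt (Nat.sub_le _ _) h.2⟩).2 (s h)) *
    M.emit (h.1 + 1) (s h) (τ h).1 *
    π.act ((List.ofFn τ).take h.1) (τ h).1 (τ h).2

/-- The value `V_M(π)` of a policy. -/
def value (M : POMDP S O A H) (π : Policy O A) : ℝ :=
  ∑ τ : Fin H → O × A, M.trajProb π τ * ∑ h : Fin H, M.reward (h.1 + 1) (τ h).1 (τ h).2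

/-- The optimal value `V_M⋆`. -/
def optValue (M : POMDP S O A H) : ℝ := ⨆ π : Policy O A, M.value π

end POMDP

/-- A `T`-episode algorithm: a distribution over actions for every
(past episodes, within-episode history, current observation), and an output policy map. -/
structure Algorithm (O A : Type) [Fintype A] (H : ℕ) where
  act : List (Fin H → O × A) → List (O × A) → O → A → ℝ
  act_nonneg : ∀ past hist o a, 0 ≤ act past hist o a
  act_sum : ∀ past hist o, ∑ a, act past hist o a = 1
  out : List (Fin H → O × A) → Policy O A

/-- The policy executed by algorithm `𝔄` in the episode following the past episodes `past`. -/
def Algorithm.policyAt {O A : Type} [Fintype A] {H : ℕ} (𝔄 : Algorithm O A H)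
    (past : List (Fin H → O × A)) : Policy O A :=
  ⟨fun hist o a => 𝔄.act past hist o a, fun _ _ _ => 𝔄.act_nonneg _ _ _ _,
    fun _ _ => 𝔄.act_sum _ _ _⟩

namespace POMDP
variable {S O A : Type} [Fintype S] [Fintype O] [Fintype A] {H : ℕ}

/-- The law `ℙ_M^𝔄` of the transcript `(τ^{(1)},…,τ^{(T)})`. -/
def transcriptProb (M : POMDP S O A H) (𝔄 : Algorithm O A H) {T : ℕ}
    (τs : Fin T → Fin H → O × A) : ℝ :=
  ∏ t : Fin T, M.trajProb (𝔄.policyAt ((List.ofFn τs).take t.1)) (τs t)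

open Classical in
/-- `ℙ_M^𝔄(V_M⋆ − V_M(π^out) < ε)`. -/
def pacProb (M : POMDP S O A H) (𝔄 : Algorithm O A H) (T : ℕ) (ε : ℝ) : ℝ :=
  ∑ τs : Fin T → Fin H → O × A,
    if M.optValue - M.value (𝔄.out (List.ofFn τs)) < ε then M.transcriptProb 𝔄 τs else 0

/-- The expected regret `E_M^𝔄[Σ_{t=1}^T (V_M⋆ − V_M(π^{(t)}))]`. -/
def expRegret (M : POMDP S O A H) (𝔄 : Algorithm O A H) (T : ℕ) : ℝ :=
  ∑ τs : Fin T → Fin H → O × A,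
    M.transcriptProb 𝔄 τs *
      ∑ t : Fin T, (M.optValue - M.value (𝔄.policyAt ((List.ofFn τs).take t.1)))

end POMDP

/-! ### Sums over paths -/

/-- The weight `∏ₜ p (x₀,…,xₜ₋₁) xₜ` of a path under a history-dependent kernel `p`. -/
def pathW {X : Type} {T : ℕ} (p : List X → X → ℝ) (τ : Fin T → X) : ℝ :=
  ∏ t : Fin T, p ((List.ofFn τ).take t.1) (τ t)

lemma ofFn_snoc {X : Type} {T : ℕ} (τ : Fin T → X) (x : X) :
    List.ofFn (Fin.snoc τ x : Fin (T + 1) → X) = List.ofFn τ ++ [x] := by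
  rw [List.ofFn_succ']
  simp

lemma pathW_snoc {X : Type} {T : ℕ} (p : List X → X → ℝ) (τ : Fin T → X) (x : X) :
    pathW p (Fin.snoc τ x : Fin (T + 1) → X) = pathW p τ * p (List.ofFn τ) x := by
  unfold pathW
  rw [Fin.prod_univ_castSucc, ofFn_snoc]
  congr 1
  · refine Finset.prod_congr rfl fun t _ => ?_
    rw [List.take_append_of_le_length (by simp)]
    simp
  · simp

lemma sum_snoc {X : Type} [Fintype X] {T : ℕ} (F : (Fin (T + 1) → X) → ℝ) :
    ∑ τ, F τ = ∑ τ : Fin T → X, ∑ x, F (Fin.snoc τ x) := by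
  rw [← (Fin.snocEquiv fun _ : Fin (T + 1) => X).sum_comp, Fintype.sum_prod_type,
    Finset.sum_comm]
  rfl

lemma pathW_nonneg {X : Type} {T : ℕ} {p : List X → X → ℝ} (hp : ∀ l x, 0 ≤ p l x)
    (τ : Fin T → X) : 0 ≤ pathW p τ :=
  Finset.prod_nonneg fun _ _ => hp _ _

/-- A function of the reversed history that is a supermartingale under `p` has expected final
value at most its initial value. Histories are reversed so that functions of them can be defined
by structural recursion, newest entry first. -/
lemma sum_pathW_le {X : Type} [Fintype X] {p : List X → X → ℝ} (hp : ∀ l x, 0 ≤ p l x)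
    (Ψ : List X → ℝ) (T : ℕ)
    (h : ∀ r : List X, r.length < T → ∑ x, p r.reverse x * Ψ (x :: r) ≤ Ψ r) :
    ∑ τ : Fin T → X, pathW p τ * Ψ (List.ofFn τ).reverse ≤ Ψ [] := by
  induction T with
  | zero => simp [pathW]
  | succ T ih =>
    refine le_trans ?_ (ih fun r hr => h r (by omega))
    rw [sum_snoc]
    refine Finset.sum_le_sum fun τ _ => ?_
    have := h (List.ofFn τ).reverse (by simp)
    rw [List.reverse_reverse] at this
    calc _ = pathW p τ * ∑ x, p (List.ofFn τ) x * Ψ (x :: (List.ofFn τ).reverse) := by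
          rw [Finset.mul_sum]
          refine Finset.sum_congr rfl fun x _ => ?_
          rw [pathW_snoc, ofFn_snoc, List.reverse_append]
          simp [mul_assoc]
      _ ≤ _ := mul_le_mul_of_nonneg_left this (pathW_nonneg hp τ)

lemma sum_pathW_eq {X : Type} [Fintype X] {p : List X → X → ℝ} (hp : ∀ l x, 0 ≤ p l x)
    (Ψ : List X → ℝ) (T : ℕ)
    (h : ∀ r : List X, r.length < T → ∑ x, p r.reverse x * Ψ (x :: r) = Ψ r) :
    ∑ τ : Fin T → X, pathW p τ * Ψ (List.ofFn τ).reverse = Ψ [] := by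
  refine le_antisymm (sum_pathW_le hp Ψ T fun r hr => (h r hr).le) ?_
  have := sum_pathW_le hp (fun r => - Ψ r) T fun r hr => by
    simp only [mul_neg, Finset.sum_neg_distrib, h r hr, le_refl]
  simp only [mul_neg, Finset.sum_neg_distrib] at this
  linarith

/-- Comparison of two final values through their conditional expectations over the last step. -/
lemma sum_pathW_mono_last {X : Type} [Fintype X] {p : List X → X → ℝ} (hp : ∀ l x, 0 ≤ p l x)
    (Ψ Ψ' : List X → ℝ) (T : ℕ)
    (h : ∀ r : List X, r.length = T →
      ∑ x, p r.reverse x * Ψ (x :: r) ≤ ∑ x, p r.reverse x * Ψ' (x :: r)) :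
    ∑ τ : Fin (T + 1) → X, pathW p τ * Ψ (List.ofFn τ).reverse ≤
      ∑ τ : Fin (T + 1) → X, pathW p τ * Ψ' (List.ofFn τ).reverse := by
  rw [sum_snoc, sum_snoc]
  refine Finset.sum_le_sum fun τ _ => ?_
  have := h (List.ofFn τ).reverse (by simp)
  rw [List.reverse_reverse] at this
  have key : ∀ Φ : List X → ℝ, ∑ x, pathW p (Fin.snoc τ x : Fin (T + 1) → X) *
      Φ (List.ofFn (Fin.snoc τ x : Fin (T + 1) → X)).reverse =
      pathW p τ * ∑ x, p (List.ofFn τ) x * Φ (x :: (List.ofFn τ).reverse) := by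
    intro Φ
    rw [Finset.mul_sum]
    refine Finset.sum_congr rfl fun x _ => ?_
    rw [pathW_snoc, ofFn_snoc, List.reverse_append]
    simp [mul_assoc]
  rw [key, key]
  exact mul_le_mul_of_nonneg_left this (pathW_nonneg hp τ)

lemma reverse_take_succ {X : Type} {T : ℕ} (τ : Fin T → X) (t : ℕ) (ht : t < T) :
    ((List.ofFn τ).take (t + 1)).reverse = τ ⟨t, ht⟩ :: ((List.ofFn τ).take t).reverse := by
  rw [List.take_add_one]
  simp [ht]

/-! ### The forward recursion of a POMDP -/

namespace POMDP
variable {S O A : Type} [Fintype S] [Fintype O] [Fintype A] {H : ℕ}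

/-- The unnormalised law of the next latent state: `fwd M r s` is the probability, under the
executed actions, of the observations in the reversed history `r` and of the latent state `s`
afterwards. -/
def fwd (M : POMDP S O A H) : List (O × A) → S → ℝ
  | [] => M.init
  | x :: r => fun s' => ∑ s, fwd M r s * M.emit (r.length + 1) s x.1 *
      M.trans (r.length + 1) s x.2 s'

lemma chain_eq (M : POMDP S O A H) (T : ℕ) (τ : Fin (T + 1) → O × A) (g : S → ℝ) :
    ∑ s : Fin (T + 1) → S, (∏ h : Fin (T + 1),
      (if h.1 = 0 then M.init (s h)
       else M.trans h.1 (s ⟨h.1 - 1, Nat.lt_of_le_of_lt (Nat.sub_le _ _) h.2⟩)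
         (τ ⟨h.1 - 1, Nat.lt_of_le_of_lt (Nat.sub_le _ _) h.2⟩).2 (s h)) *
      M.emit (h.1 + 1) (s h) (τ h).1) * g (s (Fin.last T)) =
    ∑ s, M.fwd ((List.ofFn τ).take T).reverse s * M.emit (T + 1) s (τ (Fin.last T)).1 * g s := by
  induction T generalizing g with
  | zero =>
    rw [sum_snoc]
    simp [fwd, Fin.snoc]
  | succ T ih =>
    rw [sum_snoc]
    have ih' := ih (fun h => τ h.castSucc) (fun x => ∑ y, M.trans (T + 1) x
      (τ (Fin.last T).castSucc).2 y * M.emit (T + 2) y (τ (Fin.last (T + 1))).1 * g y)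
    have e1 : (List.ofFn τ).take T = (List.ofFn fun h : Fin (T + 1) => τ h.castSucc).take T := by
      rw [List.ofFn_succ' τ, List.concat_eq_append, List.take_append_of_le_length (by simp)]
    rw [← e1] at ih'
    rw [reverse_take_succ τ T (by omega)]
    have e2 : (((List.ofFn τ).take T).reverse).length = T := by
      rw [List.length_reverse, List.length_take, List.length_ofFn]; omega
    have e3 : τ ⟨T, by omega⟩ = τ (Fin.last T).castSucc := rfl
    simp only [fwd, e2, e3]
    calc _ = _ := ?_
      _ = _ := ih'
      _ = _ := ?_
    · refine Finset.sum_congr rfl fun s _ => ?_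
      rw [Finset.mul_sum]
      refine Finset.sum_congr rfl fun y _ => ?_
      rw [Fin.prod_univ_castSucc]
      have e4 : ∀ h : Fin (T + 1), (Fin.snoc s y : Fin (T + 2) → S) h.castSucc = s h :=
        fun h => Fin.snoc_castSucc (α := fun _ => S) _ _ _
      have e5 : (Fin.snoc s y : Fin (T + 2) → S) (Fin.last (T + 1)) = y :=
        Fin.snoc_last (α := fun _ => S) _ _
      have e6 : ∀ (h : Fin (T + 1)), (Fin.snoc s y : Fin (T + 2) → S)
          ⟨h.1 - 1, by omega⟩ = s ⟨h.1 - 1, by omega⟩ :=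
        fun h => e4 ⟨h.1 - 1, by omega⟩
      have e7 : (Fin.snoc s y : Fin (T + 2) → S) ⟨T, by omega⟩ = s (Fin.last T) :=
        e4 (Fin.last T)
      simp only [Fin.val_castSucc, e4, e5, e6, Fin.val_last, Nat.add_sub_cancel, e7]
      rw [if_neg (by omega)]
      simp only [e3, Fin.castSucc_mk]
      ring
    · simp only [Finset.mul_sum, Finset.sum_mul]
      rw [Finset.sum_comm]
      refine Finset.sum_congr rfl fun y _ => Finset.sum_congr rfl fun x _ => ?_
      ring

/-- The trajectory law splits into the policy's factors and the likelihood of the observations,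
which the forward recursion computes. -/
lemma trajProb_eq (M : POMDP S O A H) (hH : 0 < H) (π : Policy O A) (τ : Fin H → O × A) :
    M.trajProb π τ = (∏ h : Fin H, π.act ((List.ofFn τ).take h.1) (τ h).1 (τ h).2) *
      ∑ s, M.fwd (List.ofFn τ).reverse s := by
  obtain ⟨T, rfl⟩ : ∃ T, H = T + 1 := ⟨H - 1, by omega⟩
  unfold trajProb
  have h1 := M.chain_eq T τ (fun _ => 1)
  simp only [mul_one] at h1
  have h2 : ∑ s, M.fwd (List.ofFn τ).reverse s =
      ∑ s, M.fwd ((List.ofFn τ).take T).reverse s * M.emit (T + 1) s (τ (Fin.last T)).1 := by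
    have e : (List.ofFn τ).reverse = ((List.ofFn τ).take (T + 1)).reverse := by
      rw [List.take_of_length_le (by simp)]
    rw [e, reverse_take_succ τ T (by omega)]
    have e2 : (((List.ofFn τ).take T).reverse).length = T := by
      rw [List.length_reverse, List.length_take, List.length_ofFn]; omega
    have e3 : τ ⟨T, by omega⟩ = τ (Fin.last T) := rfl
    simp only [fwd, e2, e3]
    rw [Finset.sum_comm]
    refine Finset.sum_congr rfl fun s _ => ?_
    rw [← Finset.mul_sum, M.trans_sum, mul_one]
  rw [h2, ← h1, Finset.mul_sum]
  refine Finset.sum_congr rfl fun s _ => ?_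
  rw [Finset.prod_mul_distrib, mul_comm]

end POMDP

/-! ### Models with a hidden combination lock -/

/-- The public part of a hard instance. Before entering the lock the latent state is an element of
`L`, moved deterministically by `move t x a` at (0-based) time `t`, where `none` means entering the
lock. `em z` is the law of the observation in the state `z : L`, and `em none` the one in the
bad lock state. -/
structure Frame (L O A : Type) [Fintype O] where
  start : L
  move : ℕ → L → A → Option L
  em : Option L → O → ℝ
  em_nonneg : ∀ z o, 0 ≤ em z o
  em_sum : ∀ z, ∑ o, em z o = 1

/-- The secret of a hard instance: `hit t x a` says that entering the lock at time `t` from `x` by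
the action `a` may lead to the good lock state, and `stay t a` says that the action `a` at time
`t` keeps the latent state good. -/
structure Secret (L A : Type) where
  hit : ℕ → L → A → Bool
  stay : ℕ → A → Bool

/-- The relative deviation `val t` of the observation law in the good lock state at time `t` from
the one in the bad lock state. -/
structure Signal {L O A : Type} [Fintype O] (F : Frame L O A) where
  val : ℕ → O → ℝ
  neg_one_le : ∀ t o, -1 ≤ val t o
  mean_zero : ∀ t, ∑ o, F.em none o * val t o = 0

namespace Frame
variable {L O A : Type} [Fintype O] (F : Frame L O A) (Z : Secret L A) (G : Signal F)

/-- The latent state in `L` after the reversed history `r`, or `none` inside the lock. -/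
def pos : List (O × A) → Option L
  | [] => some F.start
  | x :: r => (pos r).bind fun y => F.move r.length y x.2

/-- Whether the actions in the reversed history `r` entered the lock at the secret place and obeyed
the secret ever since. -/
def con : List (O × A) → Bool
  | [] => false
  | x :: r => match F.pos r with
    | some y => (F.move r.length y x.2).isNone && Z.hit r.length y x.2
    | none => con r && Z.stay r.length x.2

/-- The likelihood ratio of the observations when the secret entry always succeeds, against the
case where it always fails. -/
def lik : List (O × A) → ℝ
  | [] => 1
  | x :: r => if F.con Z r then lik r * (1 + G.val r.length x.1) else lik r

/-- The likelihood of the observations when the good lock state is never reached. -/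
def base : List (O × A) → ℝ
  | [] => 1
  | x :: r => base r * F.em (F.pos r) x.1

/-- Latent dynamics in which an attempted entry succeeds (`β = true`, at the secret place only) or
fails (`β = false`). The lock states are `Sum.inr true` (good) and `Sum.inr false` (bad). -/
def nxt (β : Bool) (t : ℕ) (s : L ⊕ Bool) (a : A) : L ⊕ Bool :=
  match s with
  | Sum.inl x => match F.move t x a with
    | some y => Sum.inl y
    | none => Sum.inr (β && Z.hit t x a)
  | Sum.inr g => Sum.inr (g && Z.stay t a)

/-- The latent state reached under `Frame.nxt`. -/
def lat (β : Bool) (r : List (O × A)) : L ⊕ Bool :=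
  match F.pos r with
  | some y => Sum.inl y
  | none => Sum.inr (β && F.con Z r)

/-- The emission law of the latent states. -/
def emL (t : ℕ) (s : L ⊕ Bool) (o : O) : ℝ :=
  match s with
  | Sum.inl x => F.em (some x) o
  | Sum.inr false => F.em none o
  | Sum.inr true => F.em none o * (1 + G.val t o)

lemma emL_nonneg (t : ℕ) (s : L ⊕ Bool) (o : O) : 0 ≤ F.emL G t s o := by
  rcases s with x | _ | _
  · exact F.em_nonneg _ _
  · exact F.em_nonneg _ _
  · exact mul_nonneg (F.em_nonneg _ _) (by linarith [G.neg_one_le t o])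

lemma emL_sum (t : ℕ) (s : L ⊕ Bool) : ∑ o, F.emL G t s o = 1 := by
  rcases s with x | _ | _
  · exact F.em_sum _
  · exact F.em_sum _
  · simp only [emL, mul_add, mul_one, Finset.sum_add_distrib, F.em_sum, G.mean_zero, add_zero]

lemma nxt_lat (β : Bool) (r : List (O × A)) (x : O × A) :
    F.nxt Z β r.length (F.lat Z β r) x.2 = F.lat Z β (x :: r) := by
  rcases hp : F.pos r with _ | y
  · simp [nxt, lat, pos, con, hp, Bool.and_assoc]
  · rcases hm : F.move r.length y x.2 with _ | z <;>
    simp [nxt, lat, pos, con, hp, hm]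

lemma con_of_pos {r : List (O × A)} {y : L} (h : F.pos r = some y) : F.con Z r = false := by
  cases r with
  | nil => rfl
  | cons x r =>
    rcases hp : F.pos r with _ | z
    · simp [pos, hp] at h
    · simp only [pos, hp, Option.bind_some] at h
      simp [con, hp, h]

lemma lik_of_pos {r : List (O × A)} {y : L} (h : F.pos r = some y) : F.lik Z G r = 1 := by
  induction r generalizing y with
  | nil => rfl
  | cons x r ih =>
    rcases hp : F.pos r with _ | z
    · simp [pos, hp] at h
    · simp [lik, F.con_of_pos Z hp, ih hp]

lemma lik_mul_emL (r : List (O × A)) (x : O × A) :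
    F.lik Z G r * F.emL G r.length (F.lat Z true r) x.1 =
      F.em (F.pos r) x.1 * F.lik Z G (x :: r) := by
  rcases hp : F.pos r with _ | y
  · rcases hc : F.con Z r <;> simp [lat, hp, hc, emL, lik] <;> ring
  · simp [lat, hp, emL, lik, F.con_of_pos Z hp, F.lik_of_pos Z G hp]

lemma emL_lat_false (r : List (O × A)) (o : O) (t : ℕ) :
    F.emL G t (F.lat Z false r) o = F.em (F.pos r) o := by
  rcases hp : F.pos r with _ | y <;> simp [lat, hp, emL]

lemma base_eq_pathW {T : ℕ} (τ : Fin T → O × A) :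
    F.base (List.ofFn τ).reverse = pathW (fun l x => F.em (F.pos l.reverse) x.1) τ := by
  induction T with
  | zero => simp [base, pathW]
  | succ T ih =>
    rw [← Fin.snoc_init_self τ, pathW_snoc, ofFn_snoc, List.reverse_append, ← ih]
    simp [base]

variable [Fintype A]

/-- The law of the next (observation, action) pair in the reference model. -/
def ker (π : Policy O A) (l : List (O × A)) (x : O × A) : ℝ :=
  F.em (F.pos l.reverse) x.1 * π.act l x.1 x.2

lemma ker_nonneg (π : Policy O A) (l : List (O × A)) (x : O × A) : 0 ≤ F.ker π l x :=
  mul_nonneg (F.em_nonneg _ _) (π.act_nonneg _ _ _)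

lemma sum_ker (π : Policy O A) (r : List (O × A)) (f : O → ℝ) :
    ∑ x, F.ker π r.reverse x * f x.1 = ∑ o, F.em (F.pos r) o * f o := by
  rw [Fintype.sum_prod_type]
  refine Finset.sum_congr rfl fun o _ => ?_
  simp only [ker, List.reverse_reverse]
  rw [← mul_one (F.em (F.pos r) o * f o), ← π.act_sum r.reverse o, Finset.mul_sum]
  refine Finset.sum_congr rfl fun a _ => ?_
  ring

variable {S : Type} [Fintype S] [Fintype L] [DecidableEq L] {H : ℕ}

/-- The hard instance: an attempt at the secret entry succeeds with probability `η`. The reward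
`R o` is collected in the last step only; `η = 0` gives the reference model. -/
def model (H : ℕ) (e : S ≃ L ⊕ Bool) (R : O → ℝ) (hR : ∀ o, 0 ≤ R o ∧ R o ≤ 1) (η : ℝ)
    (hη : 0 ≤ η ∧ η ≤ 1) : POMDP S O A H where
  init s := if e s = Sum.inl F.start then 1 else 0
  init_nonneg s := by split_ifs <;> norm_num
  init_sum := by
    rw [e.sum_comp fun s => if s = Sum.inl F.start then (1 : ℝ) else 0]
    simp
  trans h s a s' := (1 - η) * (if e s' = F.nxt Z false (h - 1) (e s) a then 1 else 0) +
    η * (if e s' = F.nxt Z true (h - 1) (e s) a then 1 else 0)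
  trans_nonneg h s a s' := by
    have h1 : 0 ≤ 1 - η := by linarith [hη.2]
    have h2 := hη.1
    positivity
  trans_sum h s a := by
    rw [e.sum_comp fun s' => (1 - η) * (if s' = F.nxt Z false (h - 1) (e s) a then (1 : ℝ) else 0) +
      η * (if s' = F.nxt Z true (h - 1) (e s) a then 1 else 0)]
    simp only [Finset.sum_add_distrib, ← Finset.mul_sum, Finset.sum_ite_eq',
      Finset.mem_univ, if_true]
    ring
  emit h s o := F.emL G (h - 1) (e s) o
  emit_nonneg h s o := F.emL_nonneg G _ _ _
  emit_sum h s := F.emL_sum G _ _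
  reward h o _ := if h = H then R o else 0
  reward_nonneg h o a := by split_ifs; exacts [(hR o).1, le_rfl]
  reward_le_one h o a := by split_ifs; exacts [(hR o).2, zero_le_one]
  reward_total τ := by
    rcases H with _ | H
    · simp
    · rw [Finset.sum_eq_single (Fin.last H)]
      · simpa using (hR _).2
      · intro b _ hb
        rw [if_neg]
        intro h
        exact hb (Fin.ext (by simpa using h))
      · simp

variable (e : S ≃ L ⊕ Bool) (R : O → ℝ) (hR : ∀ o, 0 ≤ R o ∧ R o ≤ 1) (η : ℝ)
    (hη : 0 ≤ η ∧ η ≤ 1)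

/-- The one random bit of the model, whether the secret entry succeeds, makes the forward vector a
mixture of two point masses. -/
lemma fwd_model (r : List (O × A)) (s : S) :
    (F.model Z G H e R hR η hη).fwd r s = F.base r *
      ((1 - η) * (if e s = F.lat Z false r then 1 else 0) +
        η * F.lik Z G r * (if e s = F.lat Z true r then 1 else 0)) := by
  induction r generalizing s with
  | nil =>
    by_cases h : e s = Sum.inl F.start <;>
    simp [POMDP.fwd, model, base, lat, pos, lik, h]
  | cons x r ih =>
    simp only [POMDP.fwd, ih]
    simp only [model, Nat.add_sub_cancel]
    rw [e.sum_comp fun u => F.base r * ((1 - η) * (if u = F.lat Z false r then 1 else 0) +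
      η * F.lik Z G r * (if u = F.lat Z true r then 1 else 0)) * F.emL G r.length u x.1 *
      ((1 - η) * (if e s = F.nxt Z false r.length u x.2 then 1 else 0) +
        η * (if e s = F.nxt Z true r.length u x.2 then 1 else 0))]
    have key : ∀ (f : L ⊕ Bool → ℝ), ∑ u, F.base r *
        ((1 - η) * (if u = F.lat Z false r then 1 else 0) +
        η * F.lik Z G r * (if u = F.lat Z true r then 1 else 0)) * F.emL G r.length u x.1 * f u =
        F.base r * F.em (F.pos r) x.1 * ((1 - η) * f (F.lat Z false r) +
          η * F.lik Z G (x :: r) * f (F.lat Z true r)) := by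
      intro f
      have h1 := F.lik_mul_emL Z G r x
      calc _ = ∑ u, ((if u = F.lat Z false r then
              F.base r * (1 - η) * F.emL G r.length u x.1 * f u else 0) +
            (if u = F.lat Z true r then
              F.base r * η * F.lik Z G r * F.emL G r.length u x.1 * f u else 0)) := by
            refine Finset.sum_congr rfl fun u _ => ?_
            split_ifs <;> ring
        _ = F.base r * (1 - η) * F.em (F.pos r) x.1 * f (F.lat Z false r) +
            F.base r * η * (F.lik Z G r * F.emL G r.length (F.lat Z true r) x.1) *
              f (F.lat Z true r) := by
            rw [Finset.sum_add_distrib]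
            simp only [Finset.sum_ite_eq', Finset.mem_univ, if_true, emL_lat_false]
            ring
        _ = _ := by rw [h1]; ring
    rw [key]
    simp only [nxt_lat, base]
    rcases hp : F.pos r with _ | y
    · have hf : ∀ β, F.nxt Z β r.length (F.lat Z false r) x.2 = F.lat Z false (x :: r) := by
        intro β
        rw [← nxt_lat]; simp [lat, hp, nxt]
      have ht : ∀ β, F.nxt Z β r.length (F.lat Z true r) x.2 = F.lat Z true (x :: r) := by
        intro β
        rw [← nxt_lat]; simp [lat, hp, nxt]
      rw [hf, ht]
      ring
    · have hl : F.lik Z G (x :: r) = 1 := by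
        simp [lik, F.con_of_pos Z hp, F.lik_of_pos Z G hp]
      have hlat : F.lat Z false r = F.lat Z true r := by simp [lat, hp]
      have ht := F.nxt_lat Z true r x
      have hf := F.nxt_lat Z false r x
      rw [← hlat] at ht ⊢
      rw [hl, ht, hf]
      ring

lemma trajProb_model (hH : 0 < H) (π : Policy O A) (τ : Fin H → O × A) :
    (F.model Z G H e R hR η hη).trajProb π τ =
      pathW (F.ker π) τ * (1 - η + η * F.lik Z G (List.ofFn τ).reverse) := by
  rw [POMDP.trajProb_eq _ hH]
  simp only [fwd_model]
  rw [e.sum_comp fun u => F.base (List.ofFn τ).reverse * ((1 - η) *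
    (if u = F.lat Z false (List.ofFn τ).reverse then 1 else 0) +
    η * F.lik Z G (List.ofFn τ).reverse *
      (if u = F.lat Z true (List.ofFn τ).reverse then 1 else 0))]
  rw [← Finset.mul_sum, Finset.sum_add_distrib, ← Finset.mul_sum, ← Finset.mul_sum,
    base_eq_pathW]
  simp only [Finset.sum_ite_eq', Finset.mem_univ, if_true, mul_one]
  rw [← mul_assoc]
  congr 1
  simp only [pathW, ker, ← Finset.prod_mul_distrib]
  refine Finset.prod_congr rfl fun t _ => mul_comm _ _

end Frame

/-! ### Likelihood ratios within one episode -/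

namespace Frame
variable {L O A : Type} [Fintype O] (F : Frame L O A) (Z : Secret L A) (G : Signal F)

/-- The total `w`-weight of the times at which the reversed history `r` was consistent with the
secret, that is, of the times at which the latent state could have been good. -/
def cnt (w : ℕ → ℝ) : List (O × A) → ℝ
  | [] => 0
  | _ :: r => cnt w r + if F.con Z r then w r.length else 0

lemma cnt_add (c c' : ℝ) (w w' : ℕ → ℝ) (r : List (O × A)) :
    F.cnt Z (fun t => c * w t + c' * w' t) r = c * F.cnt Z w r + c' * F.cnt Z w' r := by
  induction r with
  | nil => simp [cnt]
  | cons x r ih => simp only [cnt, ih]; split_ifs <;> ring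

lemma cnt_nonneg {w : ℕ → ℝ} (hw : ∀ t, 0 ≤ w t) (r : List (O × A)) : 0 ≤ F.cnt Z w r := by
  induction r with
  | nil => simp [cnt]
  | cons x r ih => simp only [cnt]; split_ifs <;> linarith [hw r.length]

lemma lik_nonneg (r : List (O × A)) : 0 ≤ F.lik Z G r := by
  induction r with
  | nil => simp [lik]
  | cons x r ih =>
    simp only [lik]
    split_ifs
    · exact mul_nonneg ih (by linarith [G.neg_one_le r.length x.1])
    · exact ih

lemma lik_le_pow {B : ℝ} (hB : 0 ≤ B) {H : ℕ} (hG : ∀ t o, t + 1 < H → G.val t o ≤ B)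
    (r : List (O × A)) (hr : r.length < H) : F.lik Z G r ≤ (1 + B) ^ r.length := by
  induction r with
  | nil => simp [lik]
  | cons x r ih =>
    have h1 := ih (by simp at hr; omega)
    have h2 := hG r.length x.1 (by simpa using hr)
    have h3 := F.lik_nonneg Z G r
    simp only [lik, List.length_cons, pow_succ]
    split_ifs
    · exact mul_le_mul h1 (by linarith) (by linarith [G.neg_one_le r.length x.1]) (by positivity)
    · nlinarith [pow_nonneg (by linarith : (0 : ℝ) ≤ 1 + B) r.length]

variable [Fintype A] (π : Policy O A)

lemma sum_pathW_ker (T : ℕ) : ∑ τ : Fin T → O × A, pathW (F.ker π) τ = 1 := by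
  have := sum_pathW_eq (F.ker_nonneg π) (fun _ => 1) T fun r _ => by
    rw [F.sum_ker π r fun _ => 1]; simp [F.em_sum]
  simpa using this

lemma sum_ker_lik (r : List (O × A)) :
    ∑ x, F.ker π r.reverse x * F.lik Z G (x :: r) = F.lik Z G r := by
  simp only [lik]
  rcases hc : F.con Z r
  · simp only [Bool.false_eq_true, if_false]
    rw [F.sum_ker π r fun _ => F.lik Z G r, ← Finset.sum_mul, F.em_sum, one_mul]
  · simp only [if_true]
    rcases hp : F.pos r with _ | y
    · rw [F.sum_ker π r fun o => F.lik Z G r * (1 + G.val r.length o), hp]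
      calc _ = F.lik Z G r * (∑ o, F.em none o + ∑ o, F.em none o * G.val r.length o) := by
            rw [← Finset.sum_add_distrib, Finset.mul_sum]
            exact Finset.sum_congr rfl fun o _ => by ring
        _ = _ := by rw [F.em_sum, G.mean_zero]; ring
    · rw [F.con_of_pos Z hp] at hc; cases hc

lemma sum_pathW_lik (T : ℕ) :
    ∑ τ : Fin T → O × A, pathW (F.ker π) τ * F.lik Z G (List.ofFn τ).reverse = 1 :=
  sum_pathW_eq (F.ker_nonneg π) (F.lik Z G) T fun r _ => F.sum_ker_lik Z G π r

/-- The second moment of the likelihood ratios of two signals, discounted by the number of times at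
which the signals could be observed. At such a time the posterior probability of the good state is
at most `2 * η`, so one observation contributes at most `4 * η ^ 2` times the correlation of the
signals. -/
lemma sum_pathW_lik_mul_lik (G' : Signal F) {η : ℝ} (hη0 : 0 ≤ η) (hη : η ≤ 1 / 2) {w : ℕ → ℝ}
    {H : ℕ} (hw : ∀ t, 0 ≤ w t)
    (hcorr : ∀ t < H, ∑ o, F.em none o * (G.val t o * G'.val t o) ≤ w t)
    (h2 : ∀ r : List (O × A), r.length < H → F.lik Z G r ≤ 2)
    (h2' : ∀ r : List (O × A), r.length < H → F.lik Z G' r ≤ 2) :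
    ∑ τ : Fin H → O × A, pathW (F.ker π) τ *
      ((1 - η + η * F.lik Z G (List.ofFn τ).reverse) *
        (1 - η + η * F.lik Z G' (List.ofFn τ).reverse) *
        Real.exp (-(4 * η ^ 2 * F.cnt Z w (List.ofFn τ).reverse))) ≤ 1 := by
  refine (sum_pathW_le (F.ker_nonneg π) (fun r => (1 - η + η * F.lik Z G r) *
    (1 - η + η * F.lik Z G' r) * Real.exp (-(4 * η ^ 2 * F.cnt Z w r))) H fun r hr => ?_).trans ?_
  · simp only [lik, cnt]
    rcases hc : F.con Z r
    · simp only [Bool.false_eq_true, if_false, add_zero]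
      rw [F.sum_ker π r fun _ => _, ← Finset.sum_mul, F.em_sum, one_mul]
    · simp only [if_true]
      rcases hp : F.pos r with _ | y
      swap
      · rw [F.con_of_pos Z hp] at hc; cases hc
      set P := F.lik Z G r with hP
      set P' := F.lik Z G' r with hP'
      set t := r.length
      set E := Real.exp (-(4 * η ^ 2 * F.cnt Z w r)) with hE
      have hE0 : 0 < E := Real.exp_pos _
      have hPn : 0 ≤ P := F.lik_nonneg Z G r
      have hPn' : 0 ≤ P' := F.lik_nonneg Z G' r
      have hP2 : P ≤ 2 := h2 r hr
      have hP2' : P' ≤ 2 := h2' r hr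
      rw [F.sum_ker π r fun o => (1 - η + η * (P * (1 + G.val t o))) *
        (1 - η + η * (P' * (1 + G'.val t o))) *
          Real.exp (-(4 * η ^ 2 * (F.cnt Z w r + w t))), hp]
      have hsplit : Real.exp (-(4 * η ^ 2 * (F.cnt Z w r + w t))) =
          E * Real.exp (-(4 * η ^ 2 * w t)) := by
        rw [hE, ← Real.exp_add]; congr 1; ring
      rw [hsplit]
      set D := Real.exp (-(4 * η ^ 2 * w t)) with hD
      have hD0 : 0 < D := Real.exp_pos _
      -- `(1 + x) * exp (-x) ≤ 1`
      have hDw : (1 + 4 * η ^ 2 * w t) * D ≤ 1 := by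
        have h1 := Real.add_one_le_exp (4 * η ^ 2 * w t)
        have h3 : Real.exp (4 * η ^ 2 * w t) * D = 1 := by
          rw [hD, ← Real.exp_add]; simp
        nlinarith
      set l := 1 - η + η * P with hl
      set l' := 1 - η + η * P' with hl'
      have hlP : P ≤ 2 * l := by rw [hl]; nlinarith
      have hlP' : P' ≤ 2 * l' := by rw [hl']; nlinarith
      have hPP : P * P' ≤ 4 * (l * l') := by
        have := mul_le_mul hlP hlP' hPn' (by linarith)
        linarith
      have hl0 : 0 ≤ l * l' := mul_nonneg (by linarith) (by linarith)
      have hsum : ∑ o, F.em none o * ((1 - η + η * (P * (1 + G.val t o))) *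
          (1 - η + η * (P' * (1 + G'.val t o))) * (E * D)) =
          (l * l' + η ^ 2 * (P * P') * ∑ o, F.em none o * (G.val t o * G'.val t o)) * (E * D) := by
        calc _ = (l * l' * (∑ o, F.em none o) + l' * η * P * (∑ o, F.em none o * G.val t o) +
            l * η * P' * (∑ o, F.em none o * G'.val t o) +
            η ^ 2 * (P * P') * ∑ o, F.em none o * (G.val t o * G'.val t o)) * (E * D) := by
              simp only [Finset.mul_sum, ← Finset.sum_add_distrib, Finset.sum_mul]
              refine Finset.sum_congr rfl fun o _ => ?_
              rw [hl, hl']; ring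
          _ = _ := by rw [F.em_sum, G.mean_zero, G'.mean_zero]; ring
      rw [hsum]
      have hc1 := hcorr t hr
      have hstep : l * l' + η ^ 2 * (P * P') * ∑ o, F.em none o * (G.val t o * G'.val t o) ≤
          l * l' * (1 + 4 * η ^ 2 * w t) := by
        have a1 : η ^ 2 * (P * P') * ∑ o, F.em none o * (G.val t o * G'.val t o) ≤
            η ^ 2 * (P * P') * w t :=
          mul_le_mul_of_nonneg_left hc1 (by positivity)
        have a2 : η ^ 2 * w t * (P * P') ≤ η ^ 2 * w t * (4 * (l * l')) :=
          mul_le_mul_of_nonneg_left hPP (mul_nonneg (by positivity) (hw t))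
        nlinarith
      calc _ ≤ l * l' * (1 + 4 * η ^ 2 * w t) * (E * D) :=
            mul_le_mul_of_nonneg_right hstep (by positivity)
        _ = l * l' * E * ((1 + 4 * η ^ 2 * w t) * D) := by ring
        _ ≤ l * l' * E * 1 := mul_le_mul_of_nonneg_left hDw (by positivity)
        _ = _ := by ring
  · simp [lik, cnt]

/-! ### Values of policies -/

/-- The final reward, as a function of the reversed history. -/
def lastR (R : O → ℝ) : List (O × A) → ℝ
  | [] => 0
  | x :: _ => R x.1

/-- Indicator that the lock has not been entered before the last observation. -/
def outW : List (O × A) → ℝ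
  | [] => 0
  | _ :: r => if (F.pos r).isSome then 1 else 0

/-- The probability that `π` never enters the lock (in time to be noticed). -/
def outside (H : ℕ) : ℝ :=
  ∑ τ : Fin H → O × A, pathW (F.ker π) τ * F.outW (List.ofFn τ).reverse

/-- The value of `π` when the secret entry always fails. -/
def val0 (R : O → ℝ) (H : ℕ) : ℝ :=
  ∑ τ : Fin H → O × A, pathW (F.ker π) τ * lastR R (List.ofFn τ).reverse

/-- The value of `π` when the secret entry always succeeds. -/
def val1 (R : O → ℝ) (H : ℕ) : ℝ :=
  ∑ τ : Fin H → O × A, pathW (F.ker π) τ *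
    (F.lik Z G (List.ofFn τ).reverse * lastR R (List.ofFn τ).reverse)

lemma val0_eq {R : O → ℝ} {q : ℝ} {H : ℕ} (hH : 0 < H)
    (hout : ∀ y, ∑ o, F.em (some y) o * R o = 1 / 2 + q)
    (hin : ∑ o, F.em none o * R o = 1 / 2) :
    F.val0 π R H = 1 / 2 + q * F.outside π H := by
  obtain ⟨T, rfl⟩ : ∃ T, H = T + 1 := ⟨H - 1, by omega⟩
  have key : ∀ r : List (O × A), ∑ x, F.ker π r.reverse x * lastR R (x :: r) =
      ∑ x, F.ker π r.reverse x * (1 / 2 + q * F.outW (x :: r)) := by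
    intro r
    simp only [lastR, outW]
    rw [F.sum_ker π r R, F.sum_ker π r fun _ => _, ← Finset.sum_mul, F.em_sum]
    rcases hp : F.pos r with _ | y
    · simp [hin]
    · simp [hout]
  have h1 := le_antisymm
    (sum_pathW_mono_last (F.ker_nonneg π) (lastR R) (fun r => 1 / 2 + q * F.outW r) T
      fun r _ => (key r).le)
    (sum_pathW_mono_last (F.ker_nonneg π) (fun r => 1 / 2 + q * F.outW r) (lastR R) T
      fun r _ => (key r).ge)
  have h2 := F.sum_pathW_ker π (T + 1)
  unfold val0 outside
  rw [h1]
  simp only [mul_add, Finset.sum_add_distrib, ← Finset.sum_mul, h2, Finset.mul_sum]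
  rw [one_mul]
  congr 1
  exact Finset.sum_congr rfl fun τ _ => by ring

lemma val1_le {R : O → ℝ} (hR : ∀ o, R o ≤ 1) {q : ℝ} {H : ℕ} (hH : 0 < H)
    (hout : ∀ y, ∑ o, F.em (some y) o * R o = 1 / 2 + q) :
    F.val1 Z G π R H ≤ (1 / 2 + q) * F.outside π H + (1 - F.outside π H) := by
  obtain ⟨T, rfl⟩ : ∃ T, H = T + 1 := ⟨H - 1, by omega⟩
  have h1 := sum_pathW_mono_last (F.ker_nonneg π)
    (fun r => F.lik Z G r * lastR R r)
    (fun r => (1 / 2 + q) * F.outW r + (F.lik Z G r - F.outW r)) T fun r _ => by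
      rcases hp : F.pos r with _ | y
      · refine Finset.sum_le_sum fun x _ => mul_le_mul_of_nonneg_left ?_ (F.ker_nonneg π _ _)
        simp only [outW, hp, lastR]
        simpa using mul_le_of_le_one_right (F.lik_nonneg Z G (x :: r)) (hR x.1)
      · have hl : ∀ x, F.lik Z G (x :: r) = 1 := fun x => by
          simp [lik, F.con_of_pos Z hp, F.lik_of_pos Z G hp]
        simp only [hl, outW, hp, lastR]
        rw [F.sum_ker π r fun o => 1 * R o, F.sum_ker π r fun _ => _, ← Finset.sum_mul, F.em_sum,
          hp]
        simp [hout]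
  have h2 := F.sum_pathW_lik Z G π (T + 1)
  refine h1.trans (le_of_eq ?_)
  unfold outside
  simp only [mul_add, mul_sub, Finset.sum_add_distrib, Finset.sum_sub_distrib, h2, Finset.mul_sum]
  congr 1
  exact Finset.sum_congr rfl fun τ _ => by ring

lemma outside_nonneg (H : ℕ) : 0 ≤ F.outside π H := by
  refine Finset.sum_nonneg fun τ _ => mul_nonneg (pathW_nonneg (F.ker_nonneg π) τ) ?_
  rcases (List.ofFn τ).reverse with _ | ⟨x, r⟩
  · simp [outW]
  · simp only [outW]; split_ifs <;> norm_num

/-- The policy playing the fixed action sequence `f`. -/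
def seqPol [DecidableEq A] (f : ℕ → A) : Policy O A where
  act l _ a := if a = f l.length then 1 else 0
  act_nonneg _ _ _ := by split_ifs <;> norm_num
  act_sum _ _ := by simp

/-- The actions in the reversed history are those of `f`. -/
def follows (f : ℕ → A) : List (O × A) → Prop
  | [] => True
  | x :: r => x.2 = f r.length ∧ follows f r

lemma follows_of_ne [DecidableEq A] (f : ℕ → A) {T : ℕ} {τ : Fin T → O × A}
    (h : pathW (F.ker (seqPol f)) τ ≠ 0) (t : ℕ) (ht : t ≤ T) :
    follows f ((List.ofFn τ).take t).reverse := by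
  induction t with
  | zero => simp [follows]
  | succ t ih =>
    rw [reverse_take_succ τ t ht]
    refine ⟨?_, ih (by omega)⟩
    have h1 := Finset.prod_ne_zero_iff.1 h ⟨t, ht⟩ (Finset.mem_univ _)
    simp only [ker, seqPol] at h1
    by_contra hne
    apply h1
    rw [if_neg, mul_zero]
    intro h2
    apply hne
    rw [h2]
    simp

lemma outside_seqPol [DecidableEq A] (f : ℕ → A) {H : ℕ} (hH : 0 < H)
    (hf : ∀ r : List (O × A), follows f r → (F.pos r).isSome) :
    F.outside (seqPol f) H = 1 := by
  obtain ⟨T, rfl⟩ : ∃ T, H = T + 1 := ⟨H - 1, by omega⟩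
  rw [← F.sum_pathW_ker (seqPol f) (T + 1)]
  refine Finset.sum_congr rfl fun τ _ => ?_
  by_cases h : pathW (F.ker (seqPol f)) τ = 0
  · rw [h, zero_mul]
  · have e : (List.ofFn τ).reverse = ((List.ofFn τ).take (T + 1)).reverse := by
      rw [List.take_of_length_le (by simp)]
    rw [e, reverse_take_succ τ T (by omega)]
    have h1 := hf _ (F.follows_of_ne f h T (by omega))
    simp only [outW, h1, if_true, mul_one]

lemma val1_seqPol [DecidableEq A] (f : ℕ → A) {R : O → ℝ} {H : ℕ} (hH : 0 < H)
    (hf : ∀ r : List (O × A), r.length + 1 = H → follows f r → F.con Z r = true)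
    (hR : ∀ o, F.em none o ≠ 0 → (1 + G.val (H - 1) o) * R o = 1 + G.val (H - 1) o) :
    F.val1 Z G (seqPol f) R H = 1 := by
  obtain ⟨T, rfl⟩ : ∃ T, H = T + 1 := ⟨H - 1, by omega⟩
  rw [← F.sum_pathW_lik Z G (seqPol f) (T + 1)]
  refine Finset.sum_congr rfl fun τ _ => ?_
  by_cases h : pathW (F.ker (seqPol f)) τ = 0
  · rw [h, zero_mul, zero_mul]
  · congr 1
    have e : (List.ofFn τ).reverse = ((List.ofFn τ).take (T + 1)).reverse := by
      rw [List.take_of_length_le (by simp)]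
    have h1 := Finset.prod_ne_zero_iff.1 h ⟨T, by omega⟩ (Finset.mem_univ _)
    have hfol := F.follows_of_ne f h T (by omega)
    have hlen : ((List.ofFn τ).take T).reverse.length = T := by
      rw [List.length_reverse, List.length_take, List.length_ofFn]; omega
    have hc := hf _ (by rw [hlen]) hfol
    rw [e, reverse_take_succ τ T (by omega)]
    simp only [lik, hc, if_true, lastR, hlen]
    have hp : F.pos ((List.ofFn τ).take T).reverse = none := by
      rcases hp : F.pos ((List.ofFn τ).take T).reverse with _ | y
      · rfl
      · rw [F.con_of_pos Z hp] at hc; cases hc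
    simp only [ker, hp] at h1
    rw [mul_assoc]
    congr 1
    exact hR _ (left_ne_zero_of_mul h1)

variable {S : Type} [Fintype S] [Fintype L] [DecidableEq L] {H : ℕ}
variable (e : S ≃ L ⊕ Bool) (R : O → ℝ) (hR : ∀ o, 0 ≤ R o ∧ R o ≤ 1) (η : ℝ)
    (hη : 0 ≤ η ∧ η ≤ 1)

lemma value_model (hH : 0 < H) : (F.model Z G H e R hR η hη).value π =
    (1 - η) * F.val0 π R H + η * F.val1 Z G π R H := by
  obtain ⟨T, rfl⟩ : ∃ T, H = T + 1 := ⟨H - 1, by omega⟩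
  unfold POMDP.value val0 val1
  rw [Finset.mul_sum, Finset.mul_sum, ← Finset.sum_add_distrib]
  refine Finset.sum_congr rfl fun τ _ => ?_
  rw [F.trajProb_model Z G e R hR η hη hH]
  have h1 : ∑ h : Fin (T + 1), (F.model Z G (T + 1) e R hR η hη).reward (h.1 + 1) (τ h).1 (τ h).2 =
      lastR R (List.ofFn τ).reverse := by
    have e' : (List.ofFn τ).reverse = ((List.ofFn τ).take (T + 1)).reverse := by
      rw [List.take_of_length_le (by simp)]
    rw [e', reverse_take_succ τ T (by omega), Finset.sum_eq_single (Fin.last T)]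
    · simp [model, lastR, Fin.last]
    · intro b _ hb
      simp only [model]
      rw [if_neg]
      intro h
      exact hb (Fin.ext (by simpa using h))
    · simp
  rw [h1]
  ring

lemma le_optValue_model (hH : 0 < H) :
    (1 - η) * F.val0 π R H + η * F.val1 Z G π R H ≤ (F.model Z G H e R hR η hη).optValue := by
  rw [← F.value_model Z G π e R hR η hη hH]
  refine le_ciSup (f := fun π => (F.model Z G H e R hR η hη).value π) ⟨1, ?_⟩ π
  rintro _ ⟨π', rfl⟩
  have hw : ∀ τ : Fin H → O × A, 0 ≤ pathW (F.ker π') τ := pathW_nonneg (F.ker_nonneg π')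
  have hr : ∀ r : List (O × A), lastR R r ≤ 1 := by
    rintro (_ | ⟨x, r⟩)
    · simp [lastR]
    · exact (hR x.1).2
  have a0 : F.val0 π' R H ≤ 1 := by
    rw [← F.sum_pathW_ker π' H]
    exact Finset.sum_le_sum fun τ _ => mul_le_of_le_one_right (hw τ) (hr _)
  have a1 : F.val1 Z G π' R H ≤ 1 := by
    rw [← F.sum_pathW_lik Z G π' H]
    exact Finset.sum_le_sum fun τ _ => mul_le_mul_of_nonneg_left
      (mul_le_of_le_one_right (F.lik_nonneg Z G _) (hr _)) (hw τ)
  simp only [F.value_model Z G π' e R hR η hη hH]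
  nlinarith [hη.1, hη.2]

end Frame

/-! ### Mixtures of likelihood ratios over many episodes -/

section Transcript
variable {X : Type}

/-- The sum of `f` over a list of episodes. -/
def tot (f : X → ℝ) : List X → ℝ
  | [] => 0
  | x :: r => tot f r + f x

/-- The product of `ℓ` over a list of episodes: the likelihood ratio of a transcript. -/
def ratio (ℓ : X → ℝ) : List X → ℝ
  | [] => 1
  | x :: r => ratio ℓ r * ℓ x

/-- The budgets `m`, `m'` for the totals of `j`, `f` are not exceeded yet. -/
def Act (j f : X → ℝ) (m m' : ℝ) (r : List X) : Prop := tot j r ≤ m ∧ tot f r ≤ m'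

open Classical in
/-- The likelihood ratio stopped when one of the budgets is exceeded. -/
def stopped (j f : X → ℝ) (m m' : ℝ) (ℓ : X → ℝ) : List X → ℝ
  | [] => 1
  | x :: r => if Act j f m m' r then stopped j f m m' ℓ r * ℓ x else stopped j f m m' ℓ r

variable {j f : X → ℝ} {m m' : ℝ}

lemma tot_nonneg (hf : ∀ x, 0 ≤ f x) (r : List X) : 0 ≤ tot f r := by
  induction r with
  | nil => simp [tot]
  | cons x r ih => simp only [tot]; linarith [hf x]

lemma Act.tail (hj : ∀ x, 0 ≤ j x) (hf : ∀ x, 0 ≤ f x) {x : X} {r : List X}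
    (h : Act j f m m' (x :: r)) : Act j f m m' r := by
  simp only [Act, tot] at h ⊢
  constructor <;> linarith [hj x, hf x]

lemma stopped_eq_ratio (hj : ∀ x, 0 ≤ j x) (hf : ∀ x, 0 ≤ f x) (ℓ : X → ℝ) {r : List X}
    (h : Act j f m m' r) : stopped j f m m' ℓ r = ratio ℓ r := by
  induction r with
  | nil => rfl
  | cons x r ih =>
    have h' := h.tail hj hf
    simp only [stopped, ratio, if_pos h', ih h']

lemma stopped_nonneg {ℓ : X → ℝ} (hℓ : ∀ x, 0 ≤ ℓ x) (r : List X) :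
    0 ≤ stopped j f m m' ℓ r := by
  induction r with
  | nil => simp [stopped]
  | cons x r ih =>
    simp only [stopped]
    split_ifs
    · exact mul_nonneg ih (hℓ x)
    · exact ih

lemma ratio_exp (κ κ' : ℝ) (r : List X) :
    ratio (fun x => Real.exp (-(κ * j x + κ' * f x))) r =
      Real.exp (-(κ * tot j r + κ' * tot f r)) := by
  induction r with
  | nil => simp [ratio, tot]
  | cons x r ih =>
    simp only [ratio, ih, tot, ← Real.exp_add]
    congr 1; ring

/-- Stopping exceeds the budgets by at most the contribution of one episode. -/
lemma le_stopped_exp (hj : ∀ x, 0 ≤ j x) (hf : ∀ x, 0 ≤ f x) {B B' : ℝ} (hjB : ∀ x, j x ≤ B)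
    (hfB : ∀ x, f x ≤ B') {κ κ' : ℝ} (hκ : 0 ≤ κ) (hκ' : 0 ≤ κ') (hm : 0 ≤ m + B)
    (hm' : 0 ≤ m' + B') (r : List X) :
    Real.exp (-(κ * (m + B) + κ' * (m' + B'))) ≤
      stopped j f m m' (fun x => Real.exp (-(κ * j x + κ' * f x))) r := by
  induction r with
  | nil =>
    simp only [stopped]
    exact Real.exp_le_one_iff.2 (by nlinarith [mul_nonneg hκ hm, mul_nonneg hκ' hm'])
  | cons x r ih =>
    simp only [stopped]
    split_ifs with h
    · rw [stopped_eq_ratio hj hf _ h, ratio_exp, ← Real.exp_add]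
      refine Real.exp_le_exp.2 ?_
      have h1 := mul_le_mul_of_nonneg_left (add_le_add h.1 (hjB x)) hκ
      have h2 := mul_le_mul_of_nonneg_left (add_le_add h.2 (hfB x)) hκ'
      linarith
    · exact ih

lemma sum_tot_le {Θ : Type} [Fintype Θ] {g : Θ → X → ℝ} {K : ℝ} (h : ∀ x, ∑ θ, g θ x ≤ K)
    (r : List X) : ∑ θ, tot (g θ) r ≤ r.length * K := by
  induction r with
  | nil => simp [tot]
  | cons x r ih =>
    simp only [tot, Finset.sum_add_distrib, List.length_cons]
    push_cast
    linarith [h x]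

variable [Fintype X] {p : List X → X → ℝ}

lemma sum_stopped (hp : ∀ l x, 0 ≤ p l x) (hp1 : ∀ l, ∑ x, p l x = 1) {ℓ : X → ℝ}
    (hℓ : ∀ l, ∑ x, p l x * ℓ x = 1) (T : ℕ) :
    ∑ τ : Fin T → X, pathW p τ * stopped j f m m' ℓ (List.ofFn τ).reverse = 1 :=
  sum_pathW_eq hp (stopped j f m m' ℓ) T fun r _ => by
    simp only [stopped]
    split_ifs
    · calc _ = stopped j f m m' ℓ r * ∑ x, p r.reverse x * ℓ x := by
            rw [Finset.mul_sum]; exact Finset.sum_congr rfl fun x _ => by ring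
        _ = _ := by rw [hℓ, mul_one]
    · rw [← Finset.sum_mul, hp1, one_mul]

lemma sum_stopped_mul (hp : ∀ l x, 0 ≤ p l x) (hp1 : ∀ l, ∑ x, p l x = 1) {ℓ ℓ' : X → ℝ}
    (hℓ0 : ∀ x, 0 ≤ ℓ x) (hℓ0' : ∀ x, 0 ≤ ℓ' x)
    (hj : ∀ x, 0 ≤ j x) (hf : ∀ x, 0 ≤ f x) {B B' : ℝ} (hjB : ∀ x, j x ≤ B)
    (hfB : ∀ x, f x ≤ B') {κ κ' : ℝ} (hκ : 0 ≤ κ) (hκ' : 0 ≤ κ') (hm : 0 ≤ m + B)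
    (hm' : 0 ≤ m' + B')
    (h2 : ∀ l, ∑ x, p l x * (ℓ x * ℓ' x * Real.exp (-(κ * j x + κ' * f x))) ≤ 1) (T : ℕ) :
    ∑ τ : Fin T → X, pathW p τ * (stopped j f m m' ℓ (List.ofFn τ).reverse *
      stopped j f m m' ℓ' (List.ofFn τ).reverse) ≤
      Real.exp (κ * (m + B) + κ' * (m' + B')) := by
  set D : X → ℝ := fun x => Real.exp (-(κ * j x + κ' * f x)) with hD
  have h1 := sum_pathW_le hp (fun r => stopped j f m m' ℓ r * stopped j f m m' ℓ' r *
    stopped j f m m' D r) T fun r _ => by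
      have n1 := stopped_nonneg (j := j) (f := f) (m := m) (m' := m') hℓ0 r
      have n2 := stopped_nonneg (j := j) (f := f) (m := m) (m' := m') hℓ0' r
      have n3 := stopped_nonneg (j := j) (f := f) (m := m) (m' := m') (ℓ := D)
        (fun x => (Real.exp_pos _).le) r
      simp only [stopped]
      split_ifs
      · calc _ = stopped j f m m' ℓ r * stopped j f m m' ℓ' r * stopped j f m m' D r *
              ∑ x, p r.reverse x * (ℓ x * ℓ' x * Real.exp (-(κ * j x + κ' * f x))) := by
              rw [Finset.mul_sum]
              exact Finset.sum_congr rfl fun x _ => by simp only [hD]; ring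
          _ ≤ _ := mul_le_of_le_one_right (by positivity) (h2 _)
      · rw [← Finset.sum_mul, hp1, one_mul]
  simp only [stopped, mul_one] at h1
  rw [show κ * (m + B) + κ' * (m' + B') = -(-(κ * (m + B) + κ' * (m' + B'))) by ring,
    Real.exp_neg, ← one_div, le_div_iff₀ (Real.exp_pos _), Finset.sum_mul]
  refine le_trans (Finset.sum_le_sum fun τ _ => ?_) h1
  rw [mul_assoc]
  refine mul_le_mul_of_nonneg_left ?_ (pathW_nonneg hp τ)
  exact mul_le_mul_of_nonneg_left (le_stopped_exp hj hf hjB hfB hκ hκ' hm hm' _)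
    (mul_nonneg (stopped_nonneg hℓ0 _) (stopped_nonneg hℓ0' _))

open Classical in
/-- No event can be likely under `p` and unlikely under each of the laws with likelihood ratios
`ratio (ℓ u)`, if the budgets are rarely exceeded and the second moment of the average of the
stopped ratios is small. -/
lemma mixture_contradiction {U : Type} [Fintype U] [Nonempty U]
    (hp : ∀ l x, 0 ≤ p l x) (hp1 : ∀ l, ∑ x, p l x = 1) {ℓ : U → X → ℝ}
    (hℓ0 : ∀ u x, 0 ≤ ℓ u x) (hℓ1 : ∀ u l, ∑ x, p l x * ℓ u x = 1)
    (hj : ∀ x, 0 ≤ j x) (hf : ∀ x, 0 ≤ f x) {B B' : ℝ} (hjB : ∀ x, j x ≤ B)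
    (hfB : ∀ x, f x ≤ B') {κ : U → U → ℝ} {κ' : ℝ} (hκ : ∀ u v, 0 ≤ κ u v) (hκ' : 0 ≤ κ')
    (hm : 0 ≤ m + B) (hm' : 0 ≤ m' + B')
    (h2 : ∀ u v l,
      ∑ x, p l x * (ℓ u x * ℓ v x * Real.exp (-(κ u v * j x + κ' * f x))) ≤ 1)
    (hκsum : ∑ u, ∑ v, Real.exp (κ u v * (m + B) + κ' * (m' + B')) ≤
      3 / 2 * (Fintype.card U : ℝ) ^ 2)
    {T : ℕ} {E : (Fin T → X) → Prop}
    (hE0 : 3 / 4 ≤ ∑ τ, if E τ then pathW p τ else 0)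
    (hE1 : ∀ u, ∑ τ, (if E τ then pathW p τ * ratio (ℓ u) (List.ofFn τ).reverse else 0) ≤ 1 / 4)
    (hbad : ∑ τ : Fin T → X, (if Act j f m m' (List.ofFn τ).reverse then 0 else pathW p τ)
      ≤ 1 / 50) : False := by
  set N : ℝ := (Fintype.card U : ℝ) with hN
  have hN0 : 0 < N := by rw [hN]; exact_mod_cast Fintype.card_pos
  set W : (Fin T → X) → ℝ := fun τ => pathW p τ with hW
  have hW0 : ∀ τ, 0 ≤ W τ := fun τ => pathW_nonneg hp τ
  have hW1 : ∑ τ, W τ = 1 := by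
    have := sum_pathW_eq hp (fun _ => 1) T fun r _ => by simpa using hp1 r.reverse
    simpa using this
  set Ls : U → (Fin T → X) → ℝ := fun u τ => stopped j f m m' (ℓ u) (List.ofFn τ).reverse with hLs
  have hLs0 : ∀ u τ, 0 ≤ Ls u τ := fun u τ => stopped_nonneg (hℓ0 u) _
  set Lb : (Fin T → X) → ℝ := fun τ => N⁻¹ * ∑ u, Ls u τ with hLb
  have e1 : ∑ τ, W τ * Lb τ = 1 := by
    calc _ = N⁻¹ * ∑ u, ∑ τ, W τ * Ls u τ := by
          rw [Finset.sum_comm, Finset.mul_sum]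
          refine Finset.sum_congr rfl fun τ _ => ?_
          rw [hLb, ← Finset.mul_sum]; ring
      _ = 1 := by
          simp only [hW, hLs, sum_stopped hp hp1 (hℓ1 _), Finset.sum_const, Finset.card_univ,
            nsmul_eq_mul, mul_one]
          exact inv_mul_cancel₀ hN0.ne'
  have e2 : ∑ τ, W τ * Lb τ ^ 2 ≤ 3 / 2 := by
    calc _ = (N ^ 2)⁻¹ * ∑ u, ∑ v, ∑ τ, W τ * (Ls u τ * Ls v τ) := by
          have : ∀ τ, W τ * Lb τ ^ 2 = (N ^ 2)⁻¹ * ∑ u, ∑ v, W τ * (Ls u τ * Ls v τ) := by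
            intro τ
            simp only [← Finset.mul_sum, ← Finset.sum_mul, hLb]
            field_simp
          simp only [this]
          rw [← Finset.mul_sum, Finset.sum_comm]
          congr 1
          exact Finset.sum_congr rfl fun u _ => Finset.sum_comm
      _ ≤ (N ^ 2)⁻¹ * (3 / 2 * N ^ 2) := by
          refine mul_le_mul_of_nonneg_left (le_trans ?_ hκsum) (by positivity)
          exact Finset.sum_le_sum fun u _ => Finset.sum_le_sum fun v _ =>
            sum_stopped_mul hp hp1 (hℓ0 u) (hℓ0 v) hj hf hjB hfB (hκ u v) hκ' hm hm' (h2 u v) T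
      _ = 3 / 2 := by field_simp
  set G : (Fin T → X) → Prop := fun τ => Act j f m m' (List.ofFn τ).reverse with hG
  have e3 : ∑ τ, (if E τ ∧ G τ then W τ * Lb τ else 0) ≤ 1 / 4 := by
    calc _ ≤ N⁻¹ * ∑ u, ∑ τ, (if E τ then W τ * ratio (ℓ u) (List.ofFn τ).reverse else 0) := by
          rw [Finset.sum_comm, Finset.mul_sum]
          refine Finset.sum_le_sum fun τ _ => ?_
          have hr : ∀ u, 0 ≤ ratio (ℓ u) (List.ofFn τ).reverse := fun u => by
            induction (List.ofFn τ).reverse with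
            | nil => simp [ratio]
            | cons x r ih => exact mul_nonneg ih (hℓ0 u x)
          by_cases hE : E τ
          · by_cases hGt : G τ
            · simp only [hE, hGt, and_self, if_true]
              refine le_of_eq ?_
              have : ∀ u, Ls u τ = ratio (ℓ u) (List.ofFn τ).reverse := fun u =>
                stopped_eq_ratio hj hf _ hGt
              rw [hLb]
              simp only [this]
              rw [← Finset.mul_sum]; ring
            · simp only [hE, hGt, and_false, if_false, if_true]
              have := Finset.sum_nonneg fun u (_ : u ∈ Finset.univ) => mul_nonneg (hW0 τ) (hr u)
              positivity
          · simp [hE]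
      _ ≤ N⁻¹ * ∑ _u : U, (1 / 4 : ℝ) :=
          mul_le_mul_of_nonneg_left (Finset.sum_le_sum fun u _ => hE1 u) (by positivity)
      _ = 1 / 4 := by
          simp only [Finset.sum_const, Finset.card_univ, nsmul_eq_mul]
          field_simp
          rw [hN]
  have e4 : 73 / 100 ≤ ∑ τ, (if E τ ∧ G τ then W τ else 0) := by
    have : ∑ τ, (if E τ then W τ else 0) ≤ ∑ τ, (if E τ ∧ G τ then W τ else 0) +
        ∑ τ, (if G τ then 0 else W τ) := by
      rw [← Finset.sum_add_distrib]
      refine Finset.sum_le_sum fun τ _ => ?_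
      by_cases hE : E τ <;> by_cases hGt : G τ <;> simp [hE, hGt, hW0 τ]
    linarith
  -- For an indicator `i`: `i * x ≤ x / 2 + x ^ 2 / 2 + 1 / 8`, applied to `x = 1 - Lb`.
  have e5 : ∑ τ, ((if E τ ∧ G τ then W τ else 0) - (if E τ ∧ G τ then W τ * Lb τ else 0)) ≤
      ∑ τ, W τ * ((1 - Lb τ) / 2 + (1 - Lb τ) ^ 2 / 2 + 1 / 8) := by
    refine Finset.sum_le_sum fun τ _ => ?_
    have h0 := hW0 τ
    split_ifs
    · nlinarith [mul_nonneg h0 (sq_nonneg (1 - Lb τ - 1 / 2))]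
    · nlinarith [mul_nonneg h0 (sq_nonneg (1 - Lb τ + 1 / 2))]
  have e6 : ∑ τ, W τ * ((1 - Lb τ) / 2 + (1 - Lb τ) ^ 2 / 2 + 1 / 8) =
      9 / 8 * ∑ τ, W τ - 3 / 2 * ∑ τ, W τ * Lb τ + 1 / 2 * ∑ τ, W τ * Lb τ ^ 2 := by
    simp only [Finset.mul_sum, ← Finset.sum_sub_distrib, ← Finset.sum_add_distrib]
    exact Finset.sum_congr rfl fun τ _ => by ring
  rw [Finset.sum_sub_distrib, e6, hW1, e1] at e5
  linarith

open Classical in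
/-- If in every episode the average over the secrets of the amounts spent is small, then for some
secret the budgets are rarely exceeded. -/
lemma exists_rarely_exceeded {Θ : Type} [Fintype Θ] [Nonempty Θ] (hp : ∀ l x, 0 ≤ p l x)
    (hp1 : ∀ l, ∑ x, p l x = 1) {g g' : Θ → X → ℝ} (hg : ∀ θ x, 0 ≤ g θ x)
    (hg' : ∀ θ x, 0 ≤ g' θ x) {K K' : ℝ} (hK : ∀ x, ∑ θ, g θ x ≤ Fintype.card Θ * K)
    (hK' : ∀ x, ∑ θ, g' θ x ≤ Fintype.card Θ * K') (hm : 0 < m) (hm' : 0 < m') {T : ℕ}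
    (hT : T * K ≤ m / 100) (hT' : T * K' ≤ m' / 100) :
    ∃ θ, ∑ τ : Fin T → X, (if Act (g θ) (g' θ) m m' (List.ofFn τ).reverse then 0 else pathW p τ)
      ≤ 1 / 50 := by
  set N : ℝ := (Fintype.card Θ : ℝ) with hN
  have hN0 : 0 < N := by rw [hN]; exact_mod_cast Fintype.card_pos
  have hW0 : ∀ τ : Fin T → X, 0 ≤ pathW p τ := fun τ => pathW_nonneg hp τ
  have hW1 : ∑ τ : Fin T → X, pathW p τ = 1 := by
    have := sum_pathW_eq hp (fun _ => 1) T fun r _ => by simpa using hp1 r.reverse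
    simpa using this
  have key : ∑ θ, ∑ τ : Fin T → X,
      (if Act (g θ) (g' θ) m m' (List.ofFn τ).reverse then 0 else pathW p τ) ≤
      ∑ _θ : Θ, (1 / 50 : ℝ) := by
    rw [Finset.sum_comm]
    calc _ ≤ ∑ τ : Fin T → X, pathW p τ * (N / 50) := by
          refine Finset.sum_le_sum fun τ _ => ?_
          have h1 := sum_tot_le hK (List.ofFn τ).reverse
          have h2 := sum_tot_le hK' (List.ofFn τ).reverse
          rw [List.length_reverse, List.length_ofFn] at h1 h2
          -- Markov's inequality, in the pointwise form `1[x > m] ≤ x / m`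
          calc _ ≤ ∑ θ, pathW p τ * (tot (g θ) (List.ofFn τ).reverse / m +
                  tot (g' θ) (List.ofFn τ).reverse / m') := by
                refine Finset.sum_le_sum fun θ _ => ?_
                have a1 := div_nonneg (tot_nonneg (hg θ) (List.ofFn τ).reverse) hm.le
                have a2 := div_nonneg (tot_nonneg (hg' θ) (List.ofFn τ).reverse) hm'.le
                split_ifs with hA
                · exact mul_nonneg (hW0 τ) (add_nonneg a1 a2)
                · refine le_mul_of_one_le_right (hW0 τ) ?_
                  rw [Act, not_and_or, not_le, not_le] at hA
                  rcases hA with hA | hA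
                  · have := (one_le_div hm).2 hA.le
                    linarith
                  · have := (one_le_div hm').2 hA.le
                    linarith
            _ = pathW p τ * ((∑ θ, tot (g θ) (List.ofFn τ).reverse) / m +
                  (∑ θ, tot (g' θ) (List.ofFn τ).reverse) / m') := by
                rw [← Finset.mul_sum, Finset.sum_add_distrib, Finset.sum_div, Finset.sum_div]
            _ ≤ _ := by
                refine mul_le_mul_of_nonneg_left ?_ (hW0 τ)
                have b1 : (∑ θ, tot (g θ) (List.ofFn τ).reverse) / m ≤ N / 100 := by
                  rw [div_le_iff₀ hm]
                  nlinarith [mul_le_mul_of_nonneg_left hT hN0.le]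
                have b2 : (∑ θ, tot (g' θ) (List.ofFn τ).reverse) / m' ≤ N / 100 := by
                  rw [div_le_iff₀ hm']
                  nlinarith [mul_le_mul_of_nonneg_left hT' hN0.le]
                linarith
      _ = _ := by
          rw [← Finset.sum_mul, hW1]
          simp only [Finset.sum_const, Finset.card_univ, nsmul_eq_mul]
          rw [← hN]; ring
  obtain ⟨θ, _, h⟩ := Finset.exists_le_of_sum_le Finset.univ_nonempty key
  exact ⟨θ, h⟩

end Transcript

/-! ### The hard instances -/

/-- The sign of a Boolean. -/
def sgn (b : Bool) : ℝ := if b then 1 else -1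

lemma sgn_mul_self (b : Bool) : sgn b * sgn b = 1 := by cases b <;> norm_num [sgn]

namespace Hard
variable {d k : ℕ} {O A : Type} [Fintype O] [DecidableEq A]
  (eO : O ≃ Fin (2 ^ d) ⊕ (Fin k × Bool)) (a₀ : A)

/-- Emission laws: a state outside the lock is observed exactly, and the bad lock state emits a
uniform pair of `Fin k × Bool`. -/
def em (z : Option (Fin (2 ^ d))) (o : Fin (2 ^ d) ⊕ (Fin k × Bool)) : ℝ :=
  match z, o with
  | some x, Sum.inl y => if x = y then 1 else 0
  | some _, Sum.inr _ => 0
  | none, Sum.inl _ => 0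
  | none, Sum.inr _ => 1 / (2 * k)

lemma sum_em_none (g : Fin (2 ^ d) ⊕ (Fin k × Bool) → ℝ) :
    ∑ o, em none (eO o) * g (eO o) =
      1 / (2 * k) * ∑ i, (g (Sum.inr (i, true)) + g (Sum.inr (i, false))) := by
  rw [eO.sum_comp fun o => em none o * g o, Fintype.sum_sum_type]
  simp [em, Finset.mul_sum, Fintype.sum_prod_type, mul_add]

lemma sum_em_some (x : Fin (2 ^ d)) (g : Fin (2 ^ d) ⊕ (Fin k × Bool) → ℝ) :
    ∑ o, em (some x) (eO o) * g (eO o) = g (Sum.inl x) := by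
  rw [eO.sum_comp fun o => em (some x) o * g o, Fintype.sum_sum_type]
  simp [em]

/-- During the first `d` steps the action chooses the binary digits of a leaf `x : Fin (2 ^ d)`;
afterwards `a₀` means waiting and any other action enters the lock. -/
def frame (hk : 0 < k) : Frame (Fin (2 ^ d)) O A where
  start := ⟨0, by positivity⟩
  move t x a := if t < d then some ⟨(x.1 + if a = a₀ then 0 else 2 ^ t) % 2 ^ d,
      Nat.mod_lt _ (by positivity)⟩ else if a = a₀ then some x else none
  em z o := em z (eO o)
  em_nonneg z o := by
    rcases z with _ | x <;> rcases eO o with y | y <;> simp only [em]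
    · exact le_rfl
    · positivity
    · split_ifs <;> norm_num
    · exact le_rfl
  em_sum z := by
    rcases z with _ | x
    · have := sum_em_none eO fun _ => (1 : ℝ)
      simp only [mul_one] at this
      rw [this]
      have : (k : ℝ) ≠ 0 := by positivity
      simp
      field_simp
      norm_num
    · simpa using sum_em_some eO x fun _ => (1 : ℝ)

/-- The deviation of the emission law in the good lock state: at the last step (time `H - 1`) it
determines the Boolean component, and before it has strength `3 * α` and a secret sign pattern. -/
def dev (H : ℕ) (α : ℝ) (μ : Fin k → Bool) (t : ℕ) (o : Fin (2 ^ d) ⊕ (Fin k × Bool)) : ℝ :=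
  match o with
  | Sum.inl _ => 0
  | Sum.inr (i, s) => if t + 1 = H then sgn s else 3 * α * (sgn (μ i) * sgn s)

/-- The signal with deviation `Hard.dev`. -/
def signal (hk : 0 < k) (H : ℕ) {α : ℝ} (hα : 0 ≤ α) (hα3 : 3 * α ≤ 1) (μ : Fin k → Bool) :
    Signal (frame eO a₀ hk) where
  val t o := dev H α μ t (eO o)
  neg_one_le t o := by
    rcases eO o with y | ⟨i, s⟩
    · simp [dev]
    · simp only [dev, sgn]
      split_ifs <;> linarith
  mean_zero t := by
    refine (sum_em_none eO (dev H α μ t)).trans ?_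
    rw [Finset.sum_eq_zero, mul_zero]
    intro i _
    simp only [dev, sgn, Bool.false_eq_true, if_true, if_false]
    split_ifs <;> ring

lemma dev_le {H : ℕ} {α : ℝ} (hα : 0 ≤ α) (μ : Fin k → Bool) (t : ℕ) (ht : t + 1 < H)
    (o : Fin (2 ^ d) ⊕ (Fin k × Bool)) : dev H α μ t o ≤ 3 * α := by
  rcases o with y | ⟨i, s⟩
  · simp only [dev]; linarith
  · simp only [dev, if_neg ht.ne, sgn]
    split_ifs <;> linarith

/-- The correlation of two sign patterns. -/
def corr (μ ν : Fin k → Bool) : ℝ := 1 / k * ∑ i, sgn (μ i) * sgn (ν i)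

lemma sum_dev_mul_dev (hk : 0 < k) (H : ℕ) (α : ℝ) (μ ν : Fin k → Bool) (t : ℕ) :
    ∑ o, (frame eO a₀ hk).em none o * (dev H α μ t (eO o) * dev H α ν t (eO o)) =
      if t + 1 = H then 1 else 9 * α ^ 2 * corr μ ν := by
  refine (sum_em_none eO fun o => dev H α μ t o * dev H α ν t o).trans ?_
  have hk' : (k : ℝ) ≠ 0 := by positivity
  split_ifs with h
  · simp [dev, h, sgn]
    field_simp
    norm_num
  · simp only [dev, if_neg h, corr, Finset.mul_sum]
    refine Finset.sum_congr rfl fun i _ => ?_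
    simp only [sgn]
    field_simp
    norm_num
    ring

/-- The final reward: `1 / 2 + q` outside the lock, and the Boolean component inside. -/
def rew (q : ℝ) (o : Fin (2 ^ d) ⊕ (Fin k × Bool)) : ℝ :=
  match o with
  | Sum.inl _ => 1 / 2 + q
  | Sum.inr (_, s) => if s then 1 else 0

/-- A secret: the leaf, the time (after `d`) and the action of the secret entry, and the code to be
followed inside the lock. -/
abbrev Key (d N H : ℕ) {A : Type} (a₀ : A) : Type :=
  Fin (2 ^ d) × Fin N × {a : A // a ≠ a₀} × (Fin H → A)

variable {N H : ℕ}

/-- The secret of a key. -/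
def secret (θ : Key d N H a₀) : Secret (Fin (2 ^ d)) A where
  hit t x a := decide (x = θ.1 ∧ t = d + θ.2.1.1 ∧ a = θ.2.2.1.1)
  stay t a := decide (∀ h : t < H, θ.2.2.2 ⟨t, h⟩ = a)

lemma pos_wait (hk : 0 < k) (r : List (O × A)) (hr : Frame.follows (fun _ => a₀) r) :
    ((frame eO a₀ hk).pos r).isSome := by
  induction r with
  | nil => rfl
  | cons x r ih =>
    obtain ⟨h1, h2⟩ := hr
    have := ih h2
    simp only [Frame.pos, frame] at this ⊢
    obtain ⟨y, hy⟩ := Option.isSome_iff_exists.1 this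
    rw [hy, h1]
    simp only [Option.bind_some, if_true]
    split_ifs <;> rfl

/-- The action sequence that opens the lock with key `θ`. -/
def opening (θ : Key d N H a₀) (t : ℕ) : A :=
  if t < d then (if θ.1.1.testBit t then θ.2.2.1.1 else a₀)
  else if t < d + θ.2.1.1 then a₀
  else if t = d + θ.2.1.1 then θ.2.2.1.1
  else if h : t < H then θ.2.2.2 ⟨t, h⟩ else a₀

lemma pos_opening (hk : 0 < k) (θ : Key d N H a₀) (r : List (O × A))
    (hr : Frame.follows (opening a₀ θ) r) (hl : r.length ≤ d + θ.2.1.1) :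
    ∃ y, (frame eO a₀ hk).pos r = some y ∧ y.1 = θ.1.1 % 2 ^ (min r.length d) := by
  induction r with
  | nil => exact ⟨_, rfl, by simp [frame, Nat.mod_one]⟩
  | cons x r ih =>
    obtain ⟨h1, h2⟩ := hr
    rw [List.length_cons] at hl
    obtain ⟨y, hy, hyv⟩ := ih h2 (by omega)
    simp only [Frame.pos, hy, Option.bind_some, List.length_cons]
    by_cases hd : r.length < d
    · simp only [frame, hd, if_true]
      refine ⟨_, rfl, ?_⟩
      simp only [h1, opening, hd, if_true, hyv]
      rw [min_eq_left hd.le, min_eq_left hd]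
      have hlt : θ.1.1 % 2 ^ (r.length + 1) < 2 ^ d :=
        (Nat.mod_lt _ (by positivity)).trans_le (Nat.pow_le_pow_right (by norm_num) hd)
      rw [Nat.mod_pow_succ, ← Nat.toNat_testBit] at hlt ⊢
      rcases hb : θ.1.1.testBit r.length
      · rw [hb] at hlt
        simp only [Bool.toNat_false, mul_zero, add_zero] at hlt
        simp [Nat.mod_eq_of_lt hlt]
      · rw [hb] at hlt
        simp only [Bool.toNat_true, mul_one] at hlt
        simp [θ.2.2.1.2, Nat.mod_eq_of_lt hlt]
    · have : x.2 = a₀ := by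
        rw [h1, opening, if_neg hd, if_pos (by omega)]
      simp only [frame, hd, if_false, this, if_true]
      refine ⟨y, rfl, ?_⟩
      rw [hyv, min_eq_right (by omega), min_eq_right (by omega)]

lemma con_opening (hk : 0 < k) (θ : Key d N H a₀) (r : List (O × A))
    (hr : Frame.follows (opening a₀ θ) r) (hl : d + θ.2.1.1 < r.length) :
    (frame eO a₀ hk).con (secret a₀ θ) r = true := by
  induction r with
  | nil => simp at hl
  | cons x r ih =>
    obtain ⟨h1, h2⟩ := hr
    rw [List.length_cons] at hl
    rcases Nat.lt_or_ge (d + θ.2.1.1) r.length with h | h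
    · have hc := ih h2 h
      have hp : (frame eO a₀ hk).pos r = none := by
        rcases hp : (frame eO a₀ hk).pos r with _ | y
        · rfl
        · rw [Frame.con_of_pos _ _ hp] at hc; cases hc
      simp only [Frame.con, hp, hc, Bool.true_and]
      simp only [secret, decide_eq_true_eq]
      intro hH
      rw [h1, opening, if_neg (by omega), if_neg (by omega), if_neg (by omega), dif_pos hH]
    · have he : r.length = d + θ.2.1.1 := by omega
      obtain ⟨y, hy, hyv⟩ := pos_opening eO a₀ hk θ r h2 h
      have hx : x.2 = θ.2.2.1.1 := by
        rw [h1, opening, if_neg (by omega), if_neg (by omega), if_pos he]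
      have hy' : y = θ.1 := Fin.ext (by
        rw [hyv, min_eq_right (by omega), Nat.mod_eq_of_lt θ.1.2])
      simp only [Frame.con, hy, secret, hx, hy', he, true_and, decide_true, Bool.and_true]
      simp [frame, θ.2.2.1.2]

/-! ### Counting consistent keys -/

variable (hk : 0 < k)

/-- Changing the code at a time not yet reached does not affect consistency. -/
lemma con_update (θ : Key d N H a₀) (r : List (O × A)) (t : Fin H) (ht : r.length ≤ t.1) (a : A) :
    (frame eO a₀ hk).con (secret a₀ (θ.1, θ.2.1, θ.2.2.1, Function.update θ.2.2.2 t a)) r =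
      (frame eO a₀ hk).con (secret a₀ θ) r := by
  induction r with
  | nil => rfl
  | cons x r ih =>
    rw [List.length_cons] at ht
    simp only [Frame.con, ih (by omega)]
    rcases (frame eO a₀ hk).pos r with _ | y
    · simp only [secret]
      congr 2
      refine forall_congr fun h => ?_
      rw [Function.update_of_ne (fun h' => by rw [← h'] at ht; simp at ht)]
    · rfl

variable [Fintype A]

/-- The number of keys consistent with a reversed history. -/
def num (N H : ℕ) (r : List (O × A)) : ℕ :=
  #{θ : Key d N H a₀ | (frame eO a₀ hk).con (secret a₀ θ) r = true}

lemma num_of_pos {r : List (O × A)} {y : Fin (2 ^ d)} (hp : (frame eO a₀ hk).pos r = some y) :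
    num eO a₀ hk N H r = 0 := by
  simp [num, Frame.con_of_pos _ _ hp]

lemma num_entry {r : List (O × A)} {y : Fin (2 ^ d)} (hp : (frame eO a₀ hk).pos r = some y)
    (x : O × A) : num eO a₀ hk N H (x :: r) ≤ Fintype.card A ^ H := by
  have : Fintype.card A ^ H = #(Finset.univ : Finset (Fin H → A)) := by simp
  rw [this]
  refine Finset.card_le_card_of_injOn (fun θ => θ.2.2.2)
    (fun _ _ => Finset.mem_coe.2 (Finset.mem_univ _)) ?_
  intro θ hθ θ' hθ' he
  simp only [Finset.coe_filter, Finset.mem_univ, true_and, Set.mem_ofPred_eq, Frame.con, hp, secret,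
    Bool.and_eq_true, decide_eq_true_eq] at hθ hθ'
  obtain ⟨-, h1, h2, h3⟩ := hθ
  obtain ⟨-, h1', h2', h3'⟩ := hθ'
  refine Prod.ext (h1 ▸ h1') (Prod.ext (Fin.ext (by omega)) (Prod.ext (Subtype.ext ?_) he))
  rw [← h3, ← h3']

lemma num_entry_late {r : List (O × A)} {y : Fin (2 ^ d)} (hp : (frame eO a₀ hk).pos r = some y)
    (x : O × A) (hr : d + N ≤ r.length) : num eO a₀ hk N H (x :: r) = 0 := by
  rw [num, Finset.card_eq_zero, Finset.filter_eq_empty_iff]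
  intro θ _ hθ
  simp only [Frame.con, hp, secret, Bool.and_eq_true, decide_eq_true_eq] at hθ
  have := θ.2.1.2
  omega

lemma num_lock {r : List (O × A)} (hp : (frame eO a₀ hk).pos r = none) (x : O × A)
    (hr : r.length < H) :
    num eO a₀ hk N H (x :: r) * Fintype.card A ≤ num eO a₀ hk N H r := by
  rw [num, ← Finset.card_univ, ← Finset.card_product, num]
  refine Finset.card_le_card_of_injOn (fun p => (p.1.1, p.1.2.1, p.1.2.2.1,
    Function.update p.1.2.2.2 ⟨r.length, hr⟩ p.2)) ?_ ?_
  · rintro ⟨θ, a⟩ hθ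
    simp only [Finset.coe_product, Finset.coe_filter, Finset.mem_univ, true_and, Set.mem_prod,
      Set.mem_ofPred_eq, Finset.coe_univ, Set.mem_univ, and_true, Frame.con, hp,
      Bool.and_eq_true] at hθ ⊢
    rw [con_update eO a₀ hk θ r ⟨r.length, hr⟩ le_rfl]
    exact hθ.1
  · rintro ⟨θ, a⟩ hθ ⟨θ', a'⟩ hθ' he
    simp only [Finset.coe_product, Finset.coe_filter, Finset.mem_univ, true_and, Set.mem_prod,
      Set.mem_ofPred_eq, Finset.coe_univ, Set.mem_univ, and_true, Frame.con, hp,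
      Bool.and_eq_true, secret, decide_eq_true_eq] at hθ hθ'
    have h1 := hθ.2 hr
    have h2 := hθ'.2 hr
    simp only [Prod.mk.injEq] at he
    obtain ⟨e1, e2, e3, e4⟩ := he
    have e5 : a = a' := by simpa using congrFun e4 ⟨r.length, hr⟩
    refine Prod.ext (Prod.ext e1 (Prod.ext e2 (Prod.ext e3 (funext fun i => ?_)))) e5
    by_cases hi : i = ⟨r.length, hr⟩
    · rw [hi, h1, h2]
    · simpa [hi] using congrFun e4 i

lemma sum_cnt_cons (w : ℕ → ℝ) (x : O × A) (r : List (O × A)) :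
    ∑ θ : Key d N H a₀, (frame eO a₀ hk).cnt (secret a₀ θ) w (x :: r) =
      ∑ θ : Key d N H a₀, (frame eO a₀ hk).cnt (secret a₀ θ) w r +
        num eO a₀ hk N H r * w r.length := by
  simp only [Frame.cnt, Finset.sum_add_distrib, num]
  rw [← Finset.sum_filter, Finset.sum_const, nsmul_eq_mul]

lemma sum_cnt_le (hA : 3 ≤ Fintype.card A) {w : ℕ → ℝ} (hw : ∀ t, w t ≤ 1) (r : List (O × A))
    (hr : r.length ≤ H) :
    ((frame eO a₀ hk).pos r ≠ none →
      ∑ θ : Key d N H a₀, (frame eO a₀ hk).cnt (secret a₀ θ) w r = 0) ∧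
    ∑ θ : Key d N H a₀, (frame eO a₀ hk).cnt (secret a₀ θ) w r +
      3 / 2 * num eO a₀ hk N H r ≤ 3 / 2 * (Fintype.card A : ℝ) ^ H := by
  induction r with
  | nil => simp [Frame.cnt, num, Frame.con]
  | cons x r ih =>
    rw [List.length_cons] at hr
    obtain ⟨h1, h2⟩ := ih (by omega)
    rw [sum_cnt_cons]
    rcases hp : (frame eO a₀ hk).pos r with _ | y
    · refine ⟨fun h => absurd (by simp [Frame.pos, hp]) h, ?_⟩
      have h3 : (num eO a₀ hk N H (x :: r) : ℝ) * Fintype.card A ≤ num eO a₀ hk N H r := by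
        exact_mod_cast num_lock eO a₀ hk hp x hr
      have h4 : (3 : ℝ) ≤ Fintype.card A := by exact_mod_cast hA
      have h5 : (0 : ℝ) ≤ num eO a₀ hk N H (x :: r) := by positivity
      have h6 : (0 : ℝ) ≤ num eO a₀ hk N H r := by positivity
      nlinarith [mul_le_mul_of_nonneg_left (hw r.length) h6, mul_le_mul_of_nonneg_left h4 h5]
    · rw [h1 (by simp [hp]), num_of_pos eO a₀ hk hp]
      have h3 : (num eO a₀ hk N H (x :: r) : ℝ) ≤ (Fintype.card A : ℝ) ^ H := by
        exact_mod_cast num_entry eO a₀ hk hp x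
      refine ⟨fun _ => by simp, ?_⟩
      simp only [Nat.cast_zero, zero_mul, add_zero, zero_add]
      linarith

lemma num_mul_pow_le (r : List (O × A)) (hr : r.length ≤ H) :
    num eO a₀ hk N H r * Fintype.card A ^ r.length ≤
      Fintype.card A ^ H * Fintype.card A ^ (d + N) := by
  have hA : 0 < Fintype.card A := Fintype.card_pos_iff.2 ⟨a₀⟩
  induction r with
  | nil => simp [num, Frame.con]
  | cons x r ih =>
    rw [List.length_cons] at hr ⊢
    rcases hp : (frame eO a₀ hk).pos r with _ | y
    · calc _ = num eO a₀ hk N H (x :: r) * Fintype.card A * Fintype.card A ^ r.length := by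
            rw [pow_succ]; ring
        _ ≤ num eO a₀ hk N H r * Fintype.card A ^ r.length :=
            Nat.mul_le_mul_right _ (num_lock eO a₀ hk hp x hr)
        _ ≤ _ := ih (by omega)
    · rcases Nat.lt_or_ge r.length (d + N) with h | h
      · exact Nat.mul_le_mul (num_entry eO a₀ hk hp x) (Nat.pow_le_pow_right hA h)
      · rw [num_entry_late eO a₀ hk hp x h, zero_mul]
        exact Nat.zero_le _

/-- The weight of the observations before the last one. -/
def wEarly (H t : ℕ) : ℝ := if t + 1 < H then 1 else 0

/-- The weight of the last observation. -/
def wLast (H t : ℕ) : ℝ := if t + 1 = H then 1 else 0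

lemma sum_cnt_last (r : List (O × A)) (hr : r.length ≤ H) :
    (r.length < H → ∑ θ : Key d N H a₀, (frame eO a₀ hk).cnt (secret a₀ θ) (wLast H) r = 0) ∧
    (∑ θ : Key d N H a₀, (frame eO a₀ hk).cnt (secret a₀ θ) (wLast H) r) *
      (Fintype.card A : ℝ) ^ (H - 1) ≤
        (Fintype.card A : ℝ) ^ H * (Fintype.card A : ℝ) ^ (d + N) := by
  induction r with
  | nil => simp [Frame.cnt]; positivity
  | cons x r ih =>
    rw [List.length_cons] at hr ⊢
    obtain ⟨h1, -⟩ := ih (by omega)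
    rw [sum_cnt_cons, h1 (by omega), zero_add]
    refine ⟨fun h => by simp [wLast, h.ne], ?_⟩
    rcases Nat.lt_or_ge (r.length + 1) H with h | h
    · simp only [wLast, h.ne, if_false, mul_zero, zero_mul]; positivity
    · have he : r.length + 1 = H := by omega
      have := num_mul_pow_le (N := N) eO a₀ hk r (by omega : r.length ≤ H)
      simp only [wLast, he, if_true, mul_one]
      rw [show H - 1 = r.length by omega]
      exact_mod_cast this

end Hard

/-! ### The hard instances are revealing -/

lemma opNormStarOne_le {S ι κ : Type} [Fintype S] [Fintype ι] [Fintype κ] [Unique κ]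
    (B : Matrix S (ι × κ) ℝ) {K : ℝ} (hK : 0 ≤ K) (hB : ∀ i, ∑ s, |B s i| ≤ K) :
    opNormStarOne B ≤ K := by
  refine Real.sSup_le ?_ hK
  rintro _ ⟨x, hx, rfl⟩
  have hx1 : ∑ i, |x i| ≤ 1 := by
    rw [starNorm, Fintype.sum_unique, Real.sqrt_sq (by positivity)] at hx
    rwa [Fintype.sum_prod_type, Finset.sum_congr rfl fun i _ => Fintype.sum_unique _]
  calc ∑ s, |B.mulVec x s| ≤ ∑ s, ∑ i, |B s i| * |x i| := by
        refine Finset.sum_le_sum fun s _ => (Finset.abs_sum_le_sum_abs _ _).trans ?_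
        exact (Finset.sum_congr rfl fun i _ => abs_mul _ _).le
    _ = ∑ i, (∑ s, |B s i|) * |x i| := by
        rw [Finset.sum_comm]; exact Finset.sum_congr rfl fun i _ => (Finset.sum_mul _ _ _).symm
    _ ≤ ∑ i, K * |x i| :=
        Finset.sum_le_sum fun i _ => mul_le_mul_of_nonneg_right (hB i) (abs_nonneg _)
    _ = K * ∑ i, |x i| := by rw [Finset.mul_sum]
    _ ≤ K := mul_le_of_le_one_right hK hx1

namespace Hard
variable {d k : ℕ} {O A S : Type} [Fintype O] [DecidableEq A] [Fintype S]
  (eO : O ≃ Fin (2 ^ d) ⊕ (Fin k × Bool)) (a₀ : A) (hk : 0 < k) {N H : ℕ}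
  (e : S ≃ Fin (2 ^ d) ⊕ Bool)

/-- The strength of the deviation `Hard.dev`. -/
def amp (H : ℕ) (α : ℝ) (t : ℕ) : ℝ := if t + 1 = H then 1 else 3 * α

/-- The columns of a left inverse of the emission matrix. -/
def inv (H : ℕ) (α : ℝ) (μ : Fin k → Bool) (t : ℕ) (o : Fin (2 ^ d) ⊕ (Fin k × Bool))
    (z : Fin (2 ^ d) ⊕ Bool) : ℝ :=
  match o, z with
  | Sum.inl y, Sum.inl x => if x = y then 1 else 0
  | Sum.inl _, Sum.inr _ => 0
  | Sum.inr _, Sum.inl _ => 0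
  | Sum.inr o, Sum.inr true => dev (d := d) H α μ t (Sum.inr o) / amp H α t ^ 2
  | Sum.inr o, Sum.inr false => 1 - dev (d := d) H α μ t (Sum.inr o) / amp H α t ^ 2

lemma amp_pos {α : ℝ} (hα : 0 < α) (t : ℕ) : 0 < amp H α t := by
  rw [amp]; split_ifs <;> linarith

lemma sum_abs_inv_le {α : ℝ} (hα : 0 < α) (hα3 : 3 * α ≤ 1) (μ : Fin k → Bool) (t : ℕ)
    (o : Fin (2 ^ d) ⊕ (Fin k × Bool)) : ∑ z, |inv H α μ t o z| ≤ 1 / α := by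
  have h3 : 3 ≤ 1 / α := by rw [le_div_iff₀ hα]; linarith
  rw [Fintype.sum_sum_type]
  rcases o with y | ⟨i, s⟩
  · simp only [inv, abs_zero, Finset.sum_const_zero, add_zero, apply_ite abs, abs_one,
      Finset.sum_ite_eq', Finset.mem_univ, if_true]
    linarith
  · simp only [inv, abs_zero, Finset.sum_const_zero, zero_add, Fintype.sum_bool]
    have h1 : |dev (d := d) H α μ t (Sum.inr (i, s)) / amp H α t ^ 2| = 1 / amp H α t := by
      have hs : ∀ b, |sgn b| = 1 := fun b => by cases b <;> simp [sgn]
      rw [abs_div, abs_of_pos (pow_pos (amp_pos hα t) 2)]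
      simp only [dev, amp]
      split_ifs
      · simp [hs]
      · rw [abs_mul (3 * α), abs_mul (sgn _), hs, hs, abs_of_pos (show 0 < 3 * α by linarith)]
        field_simp
    have h2 : 1 / amp H α t ≤ (1 / α - 1) / 2 := by
      rw [amp]
      split_ifs
      · linarith
      · have : 1 / (3 * α) = 1 / 3 * (1 / α) := by field_simp
        rw [this]; linarith
    have := abs_sub (1 : ℝ) (dev (d := d) H α μ t (Sum.inr (i, s)) / amp H α t ^ 2)
    rw [abs_one, h1] at this
    rw [h1]
    linarith

lemma sum_inv_mul_emL {α : ℝ} (hα : 0 < α) (hα3 : 3 * α ≤ 1) (μ : Fin k → Bool) (t : ℕ)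
    (z z' : Fin (2 ^ d) ⊕ Bool) :
    ∑ o, inv H α μ t (eO o) z *
      (frame eO a₀ hk).emL (signal eO a₀ hk H hα.le hα3 μ) t z' o = if z = z' then 1 else 0 := by
  have hk' : (k : ℝ) ≠ 0 := by positivity
  have hamp := (amp_pos (H := H) hα t).ne'
  have hm : ∀ i, dev (d := d) H α μ t (Sum.inr (i, false)) =
      -dev (d := d) H α μ t (Sum.inr (i, true)) := fun i => by
    simp only [dev, sgn, Bool.false_eq_true, if_true, if_false]; split_ifs <;> ring
  have hq : ∀ i, dev (d := d) H α μ t (Sum.inr (i, true)) ^ 2 = amp H α t ^ 2 := fun i => by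
    simp only [dev, sgn, amp, if_true]; split_ifs <;> ring
  rcases z' with x | _ | _
  · calc _ = ∑ o, em (some x) (eO o) * inv H α μ t (eO o) z :=
          Finset.sum_congr rfl fun o _ => mul_comm _ _
      _ = inv H α μ t (Sum.inl x) z := sum_em_some eO x fun o => inv H α μ t o z
      _ = _ := by rcases z with y | y <;> simp [inv]
  · calc _ = ∑ o, em none (eO o) * inv H α μ t (eO o) z :=
          Finset.sum_congr rfl fun o _ => mul_comm _ _
      _ = _ := sum_em_none eO fun o => inv H α μ t o z
      _ = _ := by
          rcases z with y | _ | _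
          · simp [inv]
          · simp only [inv, hm, if_true]
            rw [Finset.sum_congr rfl fun i _ => show _ = (2 : ℝ) by ring]
            simp only [Finset.sum_const, Finset.card_univ, Fintype.card_fin, nsmul_eq_mul]
            field_simp
          · simp only [inv, hm]
            rw [Finset.sum_congr rfl fun i _ => show _ = (0 : ℝ) by ring]
            simp
  · calc _ = ∑ o, em none (eO o) * (inv H α μ t (eO o) z * (1 + dev H α μ t (eO o))) := by
          refine Finset.sum_congr rfl fun o _ => ?_
          simp only [Frame.emL, signal, frame]; ring
      _ = _ := sum_em_none eO fun o => inv H α μ t o z * (1 + dev H α μ t o)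
      _ = _ := by
          rcases z with y | _ | _
          · simp [inv]
          · simp only [inv, hm]
            rw [Finset.sum_congr rfl fun i _ => show _ = (0 : ℝ) by
              have := hq i
              field_simp
              linarith]
            simp
          · simp only [inv, hm, if_true]
            rw [Finset.sum_congr rfl fun i _ => show _ = (2 : ℝ) by
              have := hq i
              field_simp
              linarith]
            simp only [Finset.sum_const, Finset.card_univ, Fintype.card_fin, nsmul_eq_mul]
            field_simp

lemma rew_mem {q : ℝ} (hq : 0 ≤ q ∧ q ≤ 1 / 2) (o : Fin (2 ^ d) ⊕ (Fin k × Bool)) :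
    0 ≤ rew q o ∧ rew q o ≤ 1 := by
  rcases o with y | ⟨i, s⟩
  · simp only [rew]; constructor <;> linarith [hq.1, hq.2]
  · simp only [rew]; split_ifs <;> norm_num

lemma sum_em_rew_some (q : ℝ) (y : Fin (2 ^ d)) :
    ∑ o, (frame eO a₀ hk).em (some y) o * rew q (eO o) = 1 / 2 + q :=
  sum_em_some eO y (rew q)

lemma sum_em_rew_none (q : ℝ) : ∑ o, (frame eO a₀ hk).em none o * rew q (eO o) = 1 / 2 := by
  refine (sum_em_none eO (rew q)).trans ?_
  have hk' : (k : ℝ) ≠ 0 := by positivity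
  simp only [rew, if_true, Bool.false_eq_true, if_false, add_zero, Finset.sum_const,
    Finset.card_univ, Fintype.card_fin, nsmul_eq_mul, mul_one]
  field_simp

variable [Fintype A]

lemma isRevealing_model {α : ℝ} (hα : 0 < α) (hα3 : 3 * α ≤ 1) (μ : Fin k → Bool)
    (Z : Secret (Fin (2 ^ d)) A) (R : O → ℝ) (hR : ∀ o, 0 ≤ R o ∧ R o ≤ 1) (η : ℝ)
    (hη : 0 ≤ η ∧ η ≤ 1) :
    ((frame eO a₀ hk).model Z (signal eO a₀ hk H hα.le hα3 μ) H e R hR η hη).IsRevealing 1 α := by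
  intro h _
  have : IsEmpty (Fin (1 - 1)) := inferInstanceAs (IsEmpty (Fin 0))
  refine ⟨Matrix.of fun s p => inv H α μ (h - 1) (eO (p.1 0)) (e s), ?_, ?_⟩
  · intro c _
    have : (Matrix.of fun s (p : (Fin 1 → O) × (Fin (1 - 1) → A)) =>
        inv H α μ (h - 1) (eO (p.1 0)) (e s)) * ((frame eO a₀ hk).model Z
        (signal eO a₀ hk H hα.le hα3 μ) H e R hR η hη).emitActMatrix h 1 =
        Matrix.of fun s s' => if e s = e s' then 1 else 0 := by
      ext s s'
      rw [Matrix.mul_apply, Fintype.sum_prod_type,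
        Finset.sum_congr rfl fun i _ => Fintype.sum_unique _]
      refine Eq.trans ?_ (sum_inv_mul_emL (H := H) eO a₀ hk hα hα3 μ (h - 1) (e s) (e s'))
      exact (Equiv.funUnique (Fin 1) O).sum_comp fun o => inv H α μ (h - 1) (eO o) (e s) *
        (frame eO a₀ hk).emL (signal eO a₀ hk H hα.le hα3 μ) (h - 1) (e s') o
    rw [this]
    ext s
    simp only [Matrix.mulVec, dotProduct, Matrix.of_apply]
    rw [Finset.sum_eq_single s]
    · simp
    · intro s' _ hs
      rw [if_neg fun h => hs (e.injective h).symm, zero_mul]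
    · simp
  · refine opNormStarOne_le _ (by positivity) fun p => ?_
    refine Eq.trans_le ?_ (sum_abs_inv_le (H := H) hα hα3 μ (h - 1) (eO (p.1 0)))
    exact e.sum_comp fun z => |inv H α μ (h - 1) (eO (p.1 0)) z|

/-! ### Near-optimal policies of the hard instances -/

variable {ε : ℝ} (hε : 0 < ε) (hε1 : ε ≤ 1 / 100)

/-- The instance with secret `Z` and signal `G`, in which the secret entry succeeds with
probability `η`, and staying outside the lock is worth `4 * ε` more than half a point. -/
def inst (Z : Secret (Fin (2 ^ d)) A) (G : Signal (frame eO a₀ hk)) (H : ℕ) (η : ℝ)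
    (hη : 0 ≤ η ∧ η ≤ 1) : POMDP S O A H :=
  (frame eO a₀ hk).model Z G H e (fun o => rew (4 * ε) (eO o))
    (fun o => rew_mem ⟨by linarith, by linarith⟩ (eO o)) η hη

lemma outside_of_reference (hH : 0 < H) (Z : Secret (Fin (2 ^ d)) A)
    (G : Signal (frame eO a₀ hk)) (π : Policy O A)
    (hπ : (inst eO a₀ hk e hε hε1 Z G H 0 ⟨le_rfl, zero_le_one⟩).optValue -
      (inst eO a₀ hk e hε hε1 Z G H 0 ⟨le_rfl, zero_le_one⟩).value π < ε) :
    3 / 4 < (frame eO a₀ hk).outside π H := by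
  have h1 := (frame eO a₀ hk).le_optValue_model Z G (Frame.seqPol fun _ => a₀) e
    (fun o => rew (4 * ε) (eO o)) (fun o => rew_mem ⟨by linarith, by linarith⟩ (eO o)) 0
    ⟨le_rfl, zero_le_one⟩ hH
  rw [inst, Frame.value_model _ _ _ _ _ _ _ _ _ hH] at hπ
  rw [Frame.val0_eq _ _ hH (sum_em_rew_some eO a₀ hk _) (sum_em_rew_none eO a₀ hk _)] at h1 hπ
  rw [Frame.outside_seqPol _ _ hH (pos_wait eO a₀ hk)] at h1
  nlinarith

lemma outside_of_secret {α : ℝ} (hα : 0 < α) (hα3 : 3 * α ≤ 1) (μ : Fin k → Bool)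
    (hH : d + N + 1 ≤ H) (θ : Key d N H a₀) (π : Policy O A) (hη : 0 ≤ 16 * ε ∧ 16 * ε ≤ 1)
    (hπ : (inst eO a₀ hk e hε hε1 (secret a₀ θ) (signal eO a₀ hk H hα.le hα3 μ) H (16 * ε)
        hη).optValue -
      (inst eO a₀ hk e hε hε1 (secret a₀ θ) (signal eO a₀ hk H hα.le hα3 μ) H (16 * ε)
        hη).value π < ε) :
    (frame eO a₀ hk).outside π H < 1 / 4 := by
  have hH0 : 0 < H := by omega
  have hR : ∀ o, 0 ≤ rew (4 * ε) (eO o) ∧ rew (4 * ε) (eO o) ≤ 1 :=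
    fun o => rew_mem ⟨by linarith, by linarith⟩ (eO o)
  have h1 := (frame eO a₀ hk).le_optValue_model (secret a₀ θ) (signal eO a₀ hk H hα.le hα3 μ)
    (Frame.seqPol (opening a₀ θ)) e (fun o => rew (4 * ε) (eO o)) hR (16 * ε) hη hH0
  have h2 := (frame eO a₀ hk).val1_le (secret a₀ θ) (signal eO a₀ hk H hα.le hα3 μ) π
    (fun o => (hR o).2) hH0 (sum_em_rew_some eO a₀ hk _)
  have h3 := (frame eO a₀ hk).outside_nonneg (Frame.seqPol (opening a₀ θ)) H
  rw [inst, Frame.value_model _ _ _ _ _ _ _ _ _ hH0] at hπ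
  rw [Frame.val0_eq _ _ hH0 (sum_em_rew_some eO a₀ hk _) (sum_em_rew_none eO a₀ hk _)] at h1 hπ
  rw [Frame.val1_seqPol _ _ _ _ hH0] at h1
  · have h4 : 0 ≤ (1 - 16 * ε) * (4 * ε * (frame eO a₀ hk).outside
        (Frame.seqPol (opening a₀ θ)) H) :=
      mul_nonneg (by linarith [hη.2]) (mul_nonneg (by linarith) h3)
    have h5 := mul_le_mul_of_nonneg_left h2 hη.1
    nlinarith
  · intro r hr hf
    exact con_opening eO a₀ hk θ r hf (by have := θ.2.1.2; omega)
  · intro o ho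
    simp only [signal, rew, frame] at ho ⊢
    generalize eO o = z at ho ⊢
    rcases z with y | ⟨i, s⟩
    · exact absurd rfl ho
    · simp only [dev, show H - 1 + 1 = H by omega, if_true, sgn]
      split_ifs <;> norm_num

end Hard

/-! ### Averaging over sign patterns -/

namespace Hard

lemma sum_exp_corr {k : ℕ} (hk : 0 < k) (l : ℝ) (μ : Fin k → Bool) :
    ∑ ν : Fin k → Bool, Real.exp (l * corr μ ν) = (2 * Real.cosh (l / k)) ^ k := by
  have hk' : (k : ℝ) ≠ 0 := by positivity
  have h1 : ∀ ν : Fin k → Bool, Real.exp (l * corr μ ν) =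
      ∏ i, Real.exp (l / k * (sgn (μ i) * sgn (ν i))) := fun ν => by
    rw [← Real.exp_sum, ← Finset.mul_sum, corr]
    congr 1
    field_simp
  have h2 := Finset.prod_univ_sum (fun _ : Fin k => (Finset.univ : Finset Bool))
    (fun i b => Real.exp (l / k * (sgn (μ i) * sgn b)))
  rw [Fintype.piFinset_univ] at h2
  simp only [h1]
  rw [← h2, Finset.prod_congr rfl fun i _ => show _ = 2 * Real.cosh (l / k) by
    rw [Fintype.sum_bool, Real.cosh_eq]
    rcases μ i <;> simp [sgn] <;> ring]
  simp

lemma sum_exp_pos_corr {k : ℕ} (hk : 0 < k) {l : ℝ} (hl : l ^ 2 ≤ k / 1000) (μ : Fin k → Bool) :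
    ∑ ν : Fin k → Bool, Real.exp (max (l * corr μ ν) 0) ≤
      (106 / 100) * Fintype.card (Fin k → Bool) := by
  have hk0 : (0 : ℝ) < k := by exact_mod_cast hk
  set Nn : ℝ := (Fintype.card (Fin k → Bool) : ℝ) with hN
  have hNv : Nn = 2 ^ k := by rw [hN]; simp
  have hN0 : 0 < Nn := by rw [hNv]; positivity
  have bnd : ∀ c : ℝ, Real.cosh (c / k) ^ k ≤ Real.exp (c ^ 2 / k / 2) := fun c => by
    calc _ ≤ Real.exp ((c / k) ^ 2 / 2) ^ k :=
          pow_le_pow_left₀ (Real.cosh_pos _).le (Real.cosh_le_exp_half_sq _) k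
      _ = _ := by
          rw [← Real.exp_nat_mul]; congr 1; field_simp
  have b0 : 1 ≤ Real.cosh (l / k) ^ k := one_le_pow₀ (Real.one_le_cosh _)
  have hq : l ^ 2 / k ≤ 1 / 1000 := by rw [div_le_iff₀ hk0]; linarith
  have b2 : Real.cosh (2 * l / k) ^ k ≤ 1003 / 1000 := by
    refine (bnd (2 * l)).trans ?_
    have : (2 * l) ^ 2 / k / 2 = 2 * (l ^ 2 / k) := by ring
    rw [this]
    refine (Real.exp_bound_div_one_sub_of_interval (by positivity) (by linarith)).trans ?_
    rw [div_le_iff₀ (by linarith)]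
    linarith
  -- With `w = exp x - 1`, use `w⁺ ≤ (w + s) ^ 2 / (4 * s)` for `s = 1 / 5`.
  have pt : ∀ x : ℝ, Real.exp (max x 0) ≤
      1 + 5 / 4 * (Real.exp (2 * x) - 2 * Real.exp x + 1) + (Real.exp x - 1) / 2 + 1 / 20 := by
    intro x
    have he : Real.exp (2 * x) = Real.exp x ^ 2 := by rw [← Real.exp_nat_mul]; norm_num
    rw [he]
    rcases le_total x 0 with h | h
    · rw [max_eq_right h, Real.exp_zero]
      nlinarith [sq_nonneg (Real.exp x - 1 + 1 / 5)]
    · rw [max_eq_left h]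
      nlinarith [sq_nonneg (Real.exp x - 1 - 1 / 5)]
  have s1 := sum_exp_corr hk l μ
  have s2 := sum_exp_corr hk (2 * l) μ
  rw [mul_pow, ← hNv] at s1 s2
  calc _ ≤ ∑ ν : Fin k → Bool, (1 + 5 / 4 * (Real.exp (2 * l * corr μ ν) -
          2 * Real.exp (l * corr μ ν) + 1) + (Real.exp (l * corr μ ν) - 1) / 2 + 1 / 20) :=
        Finset.sum_le_sum fun ν _ => by
          have := pt (l * corr μ ν)
          rwa [← mul_assoc] at this
    _ = ∑ _ν : Fin k → Bool, (9 / 5 : ℝ) + 5 / 4 * ∑ ν, Real.exp (2 * l * corr μ ν) -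
          2 * ∑ ν, Real.exp (l * corr μ ν) := by
        simp only [Finset.mul_sum, ← Finset.sum_add_distrib, ← Finset.sum_sub_distrib]
        exact Finset.sum_congr rfl fun ν _ => by ring
    _ ≤ _ := by
        rw [s1, s2, Finset.sum_const, Finset.card_univ, nsmul_eq_mul, ← hN]
        nlinarith

end Hard

/-! ### The law of the transcript -/

lemma ratio_ofFn {X : Type} (ℓ : X → ℝ) {T : ℕ} (τ : Fin T → X) :
    ratio ℓ (List.ofFn τ).reverse = ∏ t, ℓ (τ t) := by
  induction T with
  | zero => simp [ratio]
  | succ T ih =>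
    rw [← Fin.snoc_init_self τ, ofFn_snoc, List.reverse_append, Fin.prod_univ_castSucc]
    simp [ratio, ih]

namespace Frame
variable {L O A : Type} [Fintype O] (F : Frame L O A) (Z : Secret L A) {H : ℕ}

lemma cnt_le_length {w : ℕ → ℝ} (hw : ∀ t, w t ≤ 1) (r : List (O × A)) :
    F.cnt Z w r ≤ r.length := by
  induction r with
  | nil => simp [cnt]
  | cons x r ih =>
    simp only [cnt, List.length_cons]
    push_cast
    split_ifs <;> linarith [hw r.length]

lemma cnt_last_le (r : List (O × A)) (hr : r.length ≤ H) :
    (r.length < H → F.cnt Z (Hard.wLast H) r = 0) ∧ F.cnt Z (Hard.wLast H) r ≤ 1 := by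
  induction r with
  | nil => simp [cnt]
  | cons x r ih =>
    rw [List.length_cons] at hr ⊢
    have h1 := (ih (by omega)).1 (by omega)
    simp only [cnt, h1, Hard.wLast, zero_add]
    refine ⟨fun h => by simp [h.ne], ?_⟩
    split_ifs <;> norm_num

end Frame

namespace Frame
variable {L O A S : Type} [Fintype O] [Fintype A] (F : Frame L O A) (Z : Secret L A) (G : Signal F)
  {H : ℕ}

/-- The law of the next episode under the reference model. -/
def epi (𝔄 : Algorithm O A H) (past : List (Fin H → O × A)) (x : Fin H → O × A) : ℝ :=
  pathW (F.ker (𝔄.policyAt past)) x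

/-- The likelihood ratio of an episode, between the model with entry probability `η` and the
reference model. -/
def epiLik (η : ℝ) (x : Fin H → O × A) : ℝ := 1 - η + η * F.lik Z G (List.ofFn x).reverse

lemma epi_nonneg (𝔄 : Algorithm O A H) (past : List (Fin H → O × A)) (x : Fin H → O × A) :
    0 ≤ F.epi 𝔄 past x := pathW_nonneg (F.ker_nonneg _) x

lemma sum_epi (𝔄 : Algorithm O A H) (past : List (Fin H → O × A)) :
    ∑ x, F.epi 𝔄 past x = 1 := F.sum_pathW_ker _ _

lemma sum_epi_lik (𝔄 : Algorithm O A H) (η : ℝ) (past : List (Fin H → O × A)) :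
    ∑ x, F.epi 𝔄 past x * F.epiLik Z G η x = 1 := by
  simp only [epi, epiLik, mul_add, Finset.sum_add_distrib, ← Finset.sum_mul, F.sum_pathW_ker]
  have := F.sum_pathW_lik Z G (𝔄.policyAt past) H
  rw [Finset.sum_congr rfl fun x _ => show _ = η * (pathW (F.ker (𝔄.policyAt past)) x *
    F.lik Z G (List.ofFn x).reverse) by ring, ← Finset.mul_sum, this]
  ring

variable [Fintype S] [Fintype L] [DecidableEq L]

lemma transcriptProb_model (hH : 0 < H) (e : S ≃ L ⊕ Bool) (R : O → ℝ)
    (hR : ∀ o, 0 ≤ R o ∧ R o ≤ 1) (η : ℝ) (hη : 0 ≤ η ∧ η ≤ 1) (𝔄 : Algorithm O A H) {T : ℕ}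
    (τs : Fin T → Fin H → O × A) :
    (F.model Z G H e R hR η hη).transcriptProb 𝔄 τs =
      pathW (F.epi 𝔄) τs * ratio (F.epiLik Z G η) (List.ofFn τs).reverse := by
  rw [ratio_ofFn, pathW, ← Finset.prod_mul_distrib]
  exact Finset.prod_congr rfl fun t _ => F.trajProb_model Z G e R hR η hη hH _ _

end Frame

/-! ### No algorithm beats the budgets -/

lemma Frame.epiLik_nonneg {L O A : Type} [Fintype O] (F : Frame L O A)
    (Z : Secret L A) (G : Signal F) {H : ℕ} {η : ℝ} (hη : 0 ≤ η ∧ η ≤ 1) (x : Fin H → O × A) :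
    0 ≤ F.epiLik Z G η x := by
  have := mul_nonneg hη.1 (F.lik_nonneg Z G (List.ofFn x).reverse)
  have := hη.2
  unfold Frame.epiLik
  linarith

lemma Frame.epiLik_zero {L O A : Type} [Fintype O] (F : Frame L O A)
    (Z : Secret L A) (G : Signal F) {H : ℕ} (x : Fin H → O × A) : F.epiLik Z G 0 x = 1 := by
  simp [Frame.epiLik]

namespace Hard
variable {d k : ℕ} {O A S : Type} [Fintype O] [DecidableEq A] [Fintype S]
  (eO : O ≃ Fin (2 ^ d) ⊕ (Fin k × Bool)) (a₀ : A) (hk : 0 < k) {N H : ℕ}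
  (e : S ≃ Fin (2 ^ d) ⊕ Bool)

lemma lik_signal_le {α : ℝ} (hα : 0 ≤ α) (hα3 : 3 * α ≤ 1) (hαH : 5 * H * α ≤ 1)
    (μ : Fin k → Bool) (Z : Secret (Fin (2 ^ d)) A) (r : List (O × A)) (hr : r.length < H) :
    (frame eO a₀ hk).lik Z (signal eO a₀ hk H hα hα3 μ) r ≤ 2 := by
  refine ((frame eO a₀ hk).lik_le_pow Z (signal eO a₀ hk H hα hα3 μ) (B := 3 * α) (by linarith)
    (fun t o ht => dev_le hα μ t ht (eO o)) r hr).trans ?_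
  have h1 : (1 + 3 * α) ^ r.length ≤ Real.exp (r.length * (3 * α)) := by
    rw [Real.exp_nat_mul]
    exact pow_le_pow_left₀ (by linarith) (by linarith [Real.add_one_le_exp (3 * α)]) _
  refine h1.trans ?_
  rw [← Real.exp_log (show (0 : ℝ) < 2 by norm_num)]
  apply Real.exp_le_exp.mpr
  have h2 : (r.length : ℝ) ≤ H := by exact_mod_cast hr.le
  nlinarith [Real.log_two_gt_d9, mul_le_mul_of_nonneg_right h2 hα]

variable [Fintype A]

lemma card_key (hA : 1 ≤ Fintype.card A) : (Fintype.card (Key d N H a₀) : ℝ) =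
    2 ^ d * N * (Fintype.card A - 1) * (Fintype.card A : ℝ) ^ H := by
  have : Fintype.card {a : A // a ≠ a₀} = Fintype.card A - 1 := by
    rw [Fintype.card_subtype_compl, Fintype.card_subtype_eq]
  simp only [Fintype.card_prod, Fintype.card_fin, Fintype.card_fun, this]
  push_cast [Nat.cast_sub hA]
  ring

/-- Second moment bound for one episode. The likelihood ratios of the patterns `μ` and `ν` contribute
at most `4 * (16 * ε) ^ 2` times `9 * α ^ 2 * max (corr μ ν) 0` per consistent observation before
the last step, and times `1` for a consistent last one. -/
lemma second_moment {α ε : ℝ} (hε : 0 < ε) (hε1 : ε ≤ 1 / 100) (hα : 0 < α) (hα3 : 3 * α ≤ 1)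
    (hαH : 5 * H * α ≤ 1) (Z : Secret (Fin (2 ^ d)) A) (𝔄 : Algorithm O A H)
    (μ ν : Fin k → Bool) (past : List (Fin H → O × A)) :
    ∑ x, (frame eO a₀ hk).epi 𝔄 past x *
      ((frame eO a₀ hk).epiLik Z (signal eO a₀ hk H hα.le hα3 μ) (16 * ε) x *
        (frame eO a₀ hk).epiLik Z (signal eO a₀ hk H hα.le hα3 ν) (16 * ε) x *
        Real.exp (-(9216 * ε ^ 2 * α ^ 2 * max (corr μ ν) 0 *
            (frame eO a₀ hk).cnt Z (wEarly H) (List.ofFn x).reverse +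
          1024 * ε ^ 2 * (frame eO a₀ hk).cnt Z (wLast H) (List.ofFn x).reverse))) ≤ 1 := by
  have hmax : 0 ≤ max (corr μ ν) 0 := le_max_right _ _
  have := (frame eO a₀ hk).sum_pathW_lik_mul_lik Z (signal eO a₀ hk H hα.le hα3 μ)
    (𝔄.policyAt past) (signal eO a₀ hk H hα.le hα3 ν) (η := 16 * ε) (by linarith) (by linarith)
    (w := fun t => 9 * α ^ 2 * max (corr μ ν) 0 * wEarly H t + 1 * wLast H t) (H := H)
    (fun t => by
      have h1 : 0 ≤ wEarly H t := by unfold wEarly; split_ifs <;> norm_num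
      have h2 : 0 ≤ wLast H t := by unfold wLast; split_ifs <;> norm_num
      positivity)
    (fun t ht => by
      refine (sum_dev_mul_dev eO a₀ hk H α μ ν t).le.trans ?_
      unfold wEarly wLast
      by_cases h : t + 1 = H
      · simp [h]
      · have h' : t + 1 < H := by omega
        simp only [h, h', if_true, if_false]
        nlinarith [le_max_left (corr μ ν) 0, sq_nonneg α])
    (lik_signal_le eO a₀ hk hα.le hα3 hαH μ Z) (lik_signal_le eO a₀ hk hα.le hα3 hαH ν Z)
  refine le_trans (le_of_eq (Finset.sum_congr rfl fun x _ => ?_)) this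
  rw [Frame.cnt_add, Frame.epi, Frame.epiLik, Frame.epiLik]
  congr 4
  ring

variable {ε : ℝ} (hε : 0 < ε) (hε1 : ε ≤ 1 / 100)

/-- An algorithm that succeeds on the reference instance outputs, mostly, a policy that stays outside
the lock. -/
lemma reference_event {α : ℝ} (hα : 0 < α) (hα3 : 3 * α ≤ 1) (μ : Fin k → Bool)
    (hH : 0 < H) (Z : Secret (Fin (2 ^ d)) A) (𝔄 : Algorithm O A H) (T : ℕ)
    (hP : 3 / 4 ≤ (inst eO a₀ hk e hε hε1 Z (signal eO a₀ hk H hα.le hα3 μ) H 0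
      ⟨le_rfl, zero_le_one⟩).pacProb 𝔄 T ε) :
    3 / 4 ≤ ∑ τ : Fin T → Fin H → O × A,
      if 3 / 4 < (frame eO a₀ hk).outside (𝔄.out (List.ofFn τ)) H then
        pathW ((frame eO a₀ hk).epi 𝔄) τ else 0 := by
  refine hP.trans (Finset.sum_le_sum fun τ _ => ?_)
  have hw := pathW_nonneg ((frame eO a₀ hk).epi_nonneg 𝔄) τ
  split_ifs with h1 h2 h2
  · rw [inst, Frame.transcriptProb_model _ _ _ hH, ratio_ofFn]
    simp [Frame.epiLik_zero]
  · exact absurd (outside_of_reference eO a₀ hk e hε hε1 hH _ _ _ h1) h2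
  · exact hw
  · exact le_rfl

/-- An algorithm that succeeds on the instance with key `θ` and pattern `μ` rarely outputs a policy
that stays outside the lock. The law of the transcript is written through its likelihood ratio
against the reference instance. -/
lemma secret_event {α : ℝ} (hα : 0 < α) (hα3 : 3 * α ≤ 1) (μ : Fin k → Bool)
    (hH : d + N + 1 ≤ H) (θ : Key d N H a₀) (hη : 0 ≤ 16 * ε ∧ 16 * ε ≤ 1)
    (𝔄 : Algorithm O A H) (T : ℕ)
    (hP : 3 / 4 ≤ (inst eO a₀ hk e hε hε1 (secret a₀ θ) (signal eO a₀ hk H hα.le hα3 μ) H (16 * ε)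
        hη).pacProb 𝔄 T ε) :
    ∑ τ : Fin T → Fin H → O × A,
      (if 3 / 4 < (frame eO a₀ hk).outside (𝔄.out (List.ofFn τ)) H then
        pathW ((frame eO a₀ hk).epi 𝔄) τ * ratio ((frame eO a₀ hk).epiLik (secret a₀ θ)
          (signal eO a₀ hk H hα.le hα3 μ) (16 * ε)) (List.ofFn τ).reverse else 0) ≤ 1 / 4 := by
  have htot : ∑ τ : Fin T → Fin H → O × A, pathW ((frame eO a₀ hk).epi 𝔄) τ *
      ratio ((frame eO a₀ hk).epiLik (secret a₀ θ)
          (signal eO a₀ hk H hα.le hα3 μ) (16 * ε)) (List.ofFn τ).reverse = 1 := by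
    refine (sum_pathW_eq ((frame eO a₀ hk).epi_nonneg 𝔄) (ratio _) T fun r _ => ?_).trans rfl
    simp only [ratio]
    rw [Finset.sum_congr rfl fun x _ => show _ = ratio ((frame eO a₀ hk).epiLik (secret a₀ θ)
          (signal eO a₀ hk H hα.le hα3 μ) (16 * ε)) r * ((frame eO a₀ hk).epi 𝔄 r.reverse x *
          (frame eO a₀ hk).epiLik (secret a₀ θ)
          (signal eO a₀ hk H hα.le hα3 μ) (16 * ε) x) by ring, ← Finset.mul_sum,
      Frame.sum_epi_lik, mul_one]
  have hadd : ∑ τ : Fin T → Fin H → O × A,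
      (if 3 / 4 < (frame eO a₀ hk).outside (𝔄.out (List.ofFn τ)) H then
        pathW ((frame eO a₀ hk).epi 𝔄) τ * ratio ((frame eO a₀ hk).epiLik (secret a₀ θ)
          (signal eO a₀ hk H hα.le hα3 μ) (16 * ε)) (List.ofFn τ).reverse else 0) +
      (inst eO a₀ hk e hε hε1 (secret a₀ θ) (signal eO a₀ hk H hα.le hα3 μ) H (16 * ε)
        hη).pacProb 𝔄 T ε ≤ 1 := by
    rw [← htot, POMDP.pacProb, ← Finset.sum_add_distrib]
    refine Finset.sum_le_sum fun τ _ => ?_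
    have hw : 0 ≤ pathW ((frame eO a₀ hk).epi 𝔄) τ * ratio ((frame eO a₀ hk).epiLik (secret a₀ θ)
        (signal eO a₀ hk H hα.le hα3 μ) (16 * ε)) (List.ofFn τ).reverse := by
      rw [ratio_ofFn]
      exact mul_nonneg (pathW_nonneg ((frame eO a₀ hk).epi_nonneg 𝔄) τ)
        (Finset.prod_nonneg fun t _ => Frame.epiLik_nonneg _ _ _ hη _)
    have hT := (frame eO a₀ hk).transcriptProb_model (secret a₀ θ)
      (signal eO a₀ hk H hα.le hα3 μ) (by omega) e (fun o => rew (4 * ε) (eO o))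
      (fun o => rew_mem ⟨by linarith, by linarith⟩ (eO o)) (16 * ε) hη 𝔄 τ
    rw [inst, hT]
    split_ifs with h1 h2 h2
    · have := outside_of_secret eO a₀ hk e hε hε1 hα hα3 μ hH θ _ hη h2
      linarith
    · linarith
    · linarith
    · linarith
  linarith

/-- If the budgets `m` for the informative observations before the last step and `m'` for the last
ones are too small for distinguishing the sign patterns, and `T` episodes do not suffice for
exceeding them with a random key, then no algorithm succeeds on all instances. -/
lemma no_algorithm {α : ℝ} (hα : 0 < α) (hα3 : 3 * α ≤ 1) (hαH : 5 * H * α ≤ 1)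
    (hA : 3 ≤ Fintype.card A) (hN : 0 < N) (hH : d + N + 1 ≤ H) (hη : 0 ≤ 16 * ε ∧ 16 * ε ≤ 1)
    {m m' : ℝ} (hm : 0 < m) (hm' : 0 < m') {T : ℕ}
    (hl : (9216 * ε ^ 2 * α ^ 2 * (m + H)) ^ 2 ≤ k / 1000) (hl' : 1024 * ε ^ 2 * (m' + 1) ≤ 1 / 8)
    (hT : T * (3 / 2 / (2 ^ d * N * (Fintype.card A - 1))) ≤ m / 100)
    (hT' : T * ((Fintype.card A : ℝ) ^ (d + N) / ((Fintype.card A : ℝ) ^ (H - 1) *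
      (2 ^ d * N * (Fintype.card A - 1)))) ≤ m' / 100)
    (𝔄 : Algorithm O A H) (Z₀ : Secret (Fin (2 ^ d)) A) (μ₀ : Fin k → Bool)
    (hP0 : 3 / 4 ≤ (inst eO a₀ hk e hε hε1 Z₀ (signal eO a₀ hk H hα.le hα3 μ₀) H 0
      ⟨le_rfl, zero_le_one⟩).pacProb 𝔄 T ε)
    (hP1 : ∀ (θ : Key d N H a₀) (μ : Fin k → Bool), 3 / 4 ≤
      (inst eO a₀ hk e hε hε1 (secret a₀ θ) (signal eO a₀ hk H hα.le hα3 μ) H (16 * ε)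
        hη).pacProb 𝔄 T ε) : False := by
  have hA' : (3 : ℝ) ≤ Fintype.card A := by exact_mod_cast hA
  have hA1 : (0 : ℝ) < Fintype.card A - 1 := by linarith
  have hA0 : (0 : ℝ) < Fintype.card A := by linarith
  have hN' : (0 : ℝ) < N := by exact_mod_cast hN
  have hwE : ∀ t, 0 ≤ wEarly H t := fun t => by unfold wEarly; split_ifs <;> norm_num
  have hwE1 : ∀ t, wEarly H t ≤ 1 := fun t => by unfold wEarly; split_ifs <;> norm_num
  have hwL : ∀ t, 0 ≤ wLast H t := fun t => by unfold wLast; split_ifs <;> norm_num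
  have hlen : ∀ x : Fin H → O × A, (List.ofFn x).reverse.length = H := fun x => by simp
  obtain ⟨b, hb⟩ : ∃ b : A, b ≠ a₀ :=
    Fintype.exists_ne_of_one_lt_card (by omega) a₀
  have : Nonempty (Key d N H a₀) := ⟨(⟨0, by positivity⟩, ⟨0, hN⟩, ⟨b, hb⟩, fun _ => a₀)⟩
  have hcard := card_key (d := d) (N := N) (H := H) a₀ (by omega)
  obtain ⟨θ, hθ⟩ := exists_rarely_exceeded (p := (frame eO a₀ hk).epi 𝔄)
    ((frame eO a₀ hk).epi_nonneg 𝔄) ((frame eO a₀ hk).sum_epi 𝔄)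
    (g := fun (θ : Key d N H a₀) x =>
      (frame eO a₀ hk).cnt (secret a₀ θ) (wEarly H) (List.ofFn x).reverse)
    (g' := fun (θ : Key d N H a₀) x =>
      (frame eO a₀ hk).cnt (secret a₀ θ) (wLast H) (List.ofFn x).reverse)
    (fun θ x => Frame.cnt_nonneg _ _ hwE _) (fun θ x => Frame.cnt_nonneg _ _ hwL _)
    (K := 3 / 2 / (2 ^ d * N * (Fintype.card A - 1)))
    (K' := (Fintype.card A : ℝ) ^ (d + N) / ((Fintype.card A : ℝ) ^ (H - 1) *
      (2 ^ d * N * (Fintype.card A - 1))))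
    (fun x => by
      have := (sum_cnt_le (N := N) eO a₀ hk hA hwE1 (List.ofFn x).reverse (hlen x).le).2
      have h0 : (0 : ℝ) ≤ num eO a₀ hk N H (List.ofFn x).reverse := Nat.cast_nonneg _
      rw [hcard]
      refine (show _ ≤ 3 / 2 * (Fintype.card A : ℝ) ^ H by linarith).trans (le_of_eq ?_)
      field_simp)
    (fun x => by
      have := (sum_cnt_last (N := N) eO a₀ hk (List.ofFn x).reverse (hlen x).le).2
      rw [hcard]
      rw [← le_div_iff₀ (by positivity)] at this
      refine this.trans (le_of_eq ?_)
      field_simp)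
    hm hm' hT hT'
  refine mixture_contradiction (U := Fin k → Bool) (p := (frame eO a₀ hk).epi 𝔄)
    ((frame eO a₀ hk).epi_nonneg 𝔄) ((frame eO a₀ hk).sum_epi 𝔄)
    (ℓ := fun μ => (frame eO a₀ hk).epiLik (secret a₀ θ) (signal eO a₀ hk H hα.le hα3 μ) (16 * ε))
    (fun μ x => ?_) (fun μ l => Frame.sum_epi_lik _ _ _ _ _ _)
    (B := H) (B' := 1) (κ := fun μ ν => 9216 * ε ^ 2 * α ^ 2 * max (corr μ ν) 0)
    (κ' := 1024 * ε ^ 2)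
    (fun x => Frame.cnt_nonneg _ (secret a₀ θ) hwE _)
    (fun x => Frame.cnt_nonneg _ (secret a₀ θ) hwL _) (fun x => ?_) (fun x => ?_)
    (fun μ ν => by positivity) (by positivity)
    (by positivity) (by positivity)
    (fun μ ν l => second_moment eO a₀ hk hε hε1 hα hα3 hαH (secret a₀ θ) 𝔄 μ ν l) ?_
    (reference_event eO a₀ hk e hε hε1 hα hα3 μ₀ (by omega) Z₀ 𝔄 T hP0)
    (fun μ => secret_event eO a₀ hk e hε hε1 hα hα3 μ hH θ hη 𝔄 T (hP1 θ μ)) hθ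
  · exact Frame.epiLik_nonneg _ _ _ hη _
  · refine ((frame eO a₀ hk).cnt_le_length (secret a₀ θ) hwE1 _).trans ?_
    rw [hlen]
  · exact ((frame eO a₀ hk).cnt_last_le (secret a₀ θ) _ (hlen x).le).2
  · set l := 9216 * ε ^ 2 * α ^ 2 * (m + H) with hldef
    have hl0 : 0 ≤ l := by positivity
    have he : Real.exp (1024 * ε ^ 2 * (m' + 1)) ≤ 8 / 7 := by
      refine (Real.exp_le_exp.mpr hl').trans ?_
      refine (Real.exp_bound_div_one_sub_of_interval (by norm_num) (by norm_num)).trans ?_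
      norm_num
    have hin : ∀ μ : Fin k → Bool, ∑ ν : Fin k → Bool,
        Real.exp (9216 * ε ^ 2 * α ^ 2 * max (corr μ ν) 0 * (m + H) +
          1024 * ε ^ 2 * (m' + 1)) ≤ 3 / 2 * Fintype.card (Fin k → Bool) := fun μ => by
      have h1 : ∀ ν : Fin k → Bool, Real.exp (9216 * ε ^ 2 * α ^ 2 * max (corr μ ν) 0 * (m + H) +
          1024 * ε ^ 2 * (m' + 1)) = Real.exp (max (l * corr μ ν) 0) *
            Real.exp (1024 * ε ^ 2 * (m' + 1)) := fun ν => by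
        rw [Real.exp_add]
        congr 2
        rw [show (0 : ℝ) = l * 0 by ring, ← mul_max_of_nonneg _ _ hl0, hldef]
        ring_nf
      rw [Finset.sum_congr rfl fun ν _ => h1 ν, ← Finset.sum_mul]
      have h2 := sum_exp_pos_corr hk hl μ
      have h3 : (0 : ℝ) ≤ Fintype.card (Fin k → Bool) := Nat.cast_nonneg _
      calc _ ≤ 106 / 100 * (Fintype.card (Fin k → Bool) : ℝ) * (8 / 7) :=
            mul_le_mul h2 he (Real.exp_pos _).le (by positivity)
        _ ≤ _ := by linarith
    refine (Finset.sum_le_sum fun μ _ => hin μ).trans (le_of_eq ?_)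
    rw [Finset.sum_const, Finset.card_univ, nsmul_eq_mul]
    ring

end Hard

/-! ### Choice of the parameters -/

namespace Hard

/-- The sizes of the construction: `2 ^ d` leaves, `k` pairs of lock observations and `N` entry
times. -/
lemma exists_sizes {S O H : ℕ} (hS : 5 ≤ S) (hO : S ≤ O) (hH : 4 * Real.logb 2 S ≤ (H : ℝ)) :
    ∃ d k N : ℕ, 2 ^ d + 2 ≤ S ∧ S ≤ 4 * 2 ^ d ∧ 0 < k ∧ 2 ^ d + k * 2 ≤ O ∧ O ≤ 6 * k ∧
      8 ≤ H ∧ 0 < N ∧ H ≤ 4 * N ∧ d + N = H / 2 := by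
  obtain ⟨d, hd⟩ : ∃ d, Nat.log 2 S = d + 2 := by
    have : 2 ≤ Nat.log 2 S := Nat.le_log_of_pow_le (by norm_num) (by omega)
    exact ⟨Nat.log 2 S - 2, by omega⟩
  have h1 : 2 ^ (d + 2) ≤ S := hd ▸ Nat.pow_log_le_self 2 (by omega)
  have h2 : S < 2 ^ (d + 3) := by
    have := Nat.lt_pow_succ_log_self (b := 2) (by norm_num) S
    rwa [hd] at this
  have h3 : 4 * (d + 2) ≤ H := by
    have : ((d + 2 : ℕ) : ℝ) ≤ Real.logb 2 S := by
      rw [Real.le_logb_iff_rpow_le (by norm_num) (by exact_mod_cast (by omega : 0 < S)),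
        Real.rpow_natCast]
      exact_mod_cast h1
    have h4 : ((4 * (d + 2) : ℕ) : ℝ) ≤ H := by push_cast at this ⊢; linarith
    exact_mod_cast h4
  have h4 : (2 : ℕ) ^ (d + 2) = 2 * 2 ^ (d + 1) := by ring
  have h5 : (2 : ℕ) ^ (d + 3) = 4 * 2 ^ (d + 1) := by ring
  refine ⟨d + 1, (O - 2 ^ (d + 1)) / 2, H / 2 - (d + 1), ?_⟩
  generalize (2 : ℕ) ^ (d + 1) = n at h4 h5
  omega

/-- The number of keys per code is at least of the order `S * H * A`. -/
lemma le_card {S A H n N : ℝ} (hH : 0 ≤ H) (hA : 3 ≤ A) (hn : S ≤ 4 * n)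
    (hN : H ≤ 4 * N) (hn0 : 0 ≤ n) : S * A * H ≤ 24 * (n * N * (A - 1)) := by
  have h1 : S * H ≤ 4 * n * (4 * N) := mul_le_mul hn hN hH (by linarith)
  have hN0 : 0 ≤ n * N := mul_nonneg hn0 (by linarith)
  nlinarith [mul_le_mul_of_nonneg_right h1 (by linarith : (0 : ℝ) ≤ A)]

/-- The budget for informative observations before the last step, with `10 ^ (-12)` as the absolute
constant, is too small for distinguishing the sign patterns. -/
lemma budget_signal {α ε : ℝ} {O k H : ℕ} (hα : 0 < α) (hε : 0 < ε) (hε1 : ε ≤ 1 / 100)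
    (hαH : 5 * H * α ≤ 1) (hH : 8 ≤ H) (hk : 0 < k) (hO : O ≤ 6 * k) :
    (9216 * ε ^ 2 * α ^ 2 * (3600 * (1 / 10 ^ 12) * Real.sqrt O / (α ^ 2 * ε ^ 2) + H)) ^ 2 ≤
      k / 1000 := by
  have hk1 : (1 : ℝ) ≤ k := by exact_mod_cast hk
  have hH8 : (8 : ℝ) ≤ H := by exact_mod_cast hH
  have hs1 : 1 ≤ Real.sqrt k := Real.one_le_sqrt.mpr hk1
  have hsO : Real.sqrt O ≤ 3 * Real.sqrt k := by
    rw [show (3 : ℝ) = Real.sqrt 9 by rw [show (9 : ℝ) = 3 ^ 2 by norm_num, Real.sqrt_sq]; norm_num,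
      ← Real.sqrt_mul (by norm_num)]
    apply Real.sqrt_le_sqrt
    have : (O : ℝ) ≤ 6 * k := by exact_mod_cast hO
    linarith
  have h1 : 9216 * ε ^ 2 * α ^ 2 * (3600 * (1 / 10 ^ 12) * Real.sqrt O / (α ^ 2 * ε ^ 2) + H) =
      9216 * 3600 / 10 ^ 12 * Real.sqrt O + 9216 * ε ^ 2 * (α * (H * α)) := by
    field_simp
  have hα1 : α ≤ 1 / 40 := by nlinarith
  have h2 : α * (H * α) ≤ 1 / 40 * (1 / 5) :=
    mul_le_mul hα1 (by linarith) (by positivity) (by norm_num)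
  have h3 : ε ^ 2 ≤ (1 / 100) ^ 2 := pow_le_pow_left₀ hε.le hε1 2
  have h4 : ε ^ 2 * (α * (H * α)) ≤ (1 / 100) ^ 2 * (1 / 40 * (1 / 5)) :=
    mul_le_mul h3 h2 (by positivity) (by norm_num)
  have h5 : 9216 * 3600 / 10 ^ 12 * Real.sqrt O + 9216 * ε ^ 2 * (α * (H * α)) ≤
      Real.sqrt k / 100 := by nlinarith
  rw [h1]
  refine (pow_le_pow_left₀ (by positivity) h5 2).trans ?_
  rw [div_pow, Real.sq_sqrt (by linarith)]
  linarith

end Hard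

/-- **PAC lower bound for single-step revealing POMDPs** (Theorem 3.1).
There is an absolute constant `c > 0` such that for all `O ≥ S ≥ 5`, `A ≥ 3`,
`H ≥ 4 log₂ S`, `α ∈ (0, 1/(5H)]` and `ε ∈ (0, 0.01]`, there is a finite family `ℳ` of
single-step `α`-revealing POMDPs with `|𝒮| ≤ S`, `|𝒪| ≤ O`, `|𝒜| = A` such that any
`T`-episode algorithm returning an `ε`-optimal policy with probability `≥ 3/4` on every
member of `ℳ` must have `T ≥ c · min{ S·√O·A·H/(α²ε²), S·A^{H/2}·H/ε² }`. -/
theorem one_step_revealing_pac_lower_bound :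
    ∃ c : ℝ, 0 < c ∧
      ∀ (S O A H : ℕ), 5 ≤ S → S ≤ O → 3 ≤ A →
        4 * Real.logb 2 S ≤ (H : ℝ) →
        ∀ α : ℝ, 0 < α → α ≤ 1 / (5 * H) →
        ∀ ε : ℝ, 0 < ε → ε ≤ 0.01 →
        ∃ (σ ω : ℕ), 0 < σ ∧ σ ≤ S ∧ 0 < ω ∧ ω ≤ O ∧
          ∃ ℳ : Set (POMDP (Fin σ) (Fin ω) (Fin A) H),
            ℳ.Finite ∧
            (∀ M ∈ ℳ, M.IsRevealing 1 α) ∧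
            ∀ (T : ℕ) (𝔄 : Algorithm (Fin ω) (Fin A) H),
              (∀ M ∈ ℳ, (3 : ℝ) / 4 ≤ M.pacProb 𝔄 T ε) →
              c * min ((S : ℝ) * Real.sqrt O * A * H / (α ^ 2 * ε ^ 2))
                  ((S : ℝ) * (A : ℝ) ^ ((H : ℝ) / 2) * H / ε ^ 2) ≤ (T : ℝ) := by
  refine ⟨1 / 10 ^ 12, by positivity, ?_⟩
  intro S O A H hS hO hA hH α hα hαH ε hε hε1
  obtain ⟨d, k, N, hdS, hSd, hk, hkO, hOk, hH8, hN, hHN, hdN⟩ := Hard.exists_sizes hS hO hH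
  have hε1 : ε ≤ 1 / 100 := by norm_num at hε1 ⊢; exact hε1
  have hH0 : (8 : ℝ) ≤ H := by exact_mod_cast hH8
  have hA0 : (3 : ℝ) ≤ A := by exact_mod_cast hA
  have hαH : 5 * H * α ≤ 1 := by
    rw [le_div_iff₀ (by positivity)] at hαH
    linarith
  have hα3 : 3 * α ≤ 1 := by nlinarith
  have hη : 0 ≤ 16 * ε ∧ 16 * ε ≤ 1 := ⟨by linarith, by linarith⟩
  let eS : Fin (2 ^ d + 2) ≃ Fin (2 ^ d) ⊕ Bool := Fintype.equivOfCardEq (by simp)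
  let eO : Fin (2 ^ d + k * 2) ≃ Fin (2 ^ d) ⊕ (Fin k × Bool) :=
    Fintype.equivOfCardEq (by simp)
  let a₀ : Fin A := ⟨0, by omega⟩
  let Z₀ : Secret (Fin (2 ^ d)) (Fin A) := ⟨fun _ _ _ => false, fun _ _ => false⟩
  let μ₀ : Fin k → Bool := fun _ => true
  refine ⟨2 ^ d + 2, 2 ^ d + k * 2, by positivity, hdS, by positivity, hkO,
    insert (Hard.inst eO a₀ hk eS hε hε1 Z₀ (Hard.signal eO a₀ hk H hα.le hα3 μ₀) H 0
      ⟨le_rfl, zero_le_one⟩)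
    (Set.range fun p : Hard.Key d N H a₀ × (Fin k → Bool) =>
      Hard.inst eO a₀ hk eS hε hε1 (Hard.secret a₀ p.1)
        (Hard.signal eO a₀ hk H hα.le hα3 p.2) H (16 * ε) hη),
    (Set.finite_range _).insert _, ?_, ?_⟩
  · rintro M (rfl | ⟨p, rfl⟩)
    · exact Hard.isRevealing_model eO a₀ hk eS hα hα3 _ _ _ _ _ _
    · exact Hard.isRevealing_model eO a₀ hk eS hα hα3 _ _ _ _ _ _
  intro T 𝔄 hP
  by_contra hT
  rw [not_le] at hT
  have hT1 : (T : ℝ) < 1 / 10 ^ 12 * ((S : ℝ) * Real.sqrt O * A * H / (α ^ 2 * ε ^ 2)) :=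
    hT.trans_le (mul_le_mul_of_nonneg_left (min_le_left _ _) (by positivity))
  have hT2 : (T : ℝ) < 1 / 10 ^ 12 * ((S : ℝ) * (A : ℝ) ^ ((H : ℝ) / 2) * H / ε ^ 2) :=
    hT.trans_le (mul_le_mul_of_nonneg_left (min_le_right _ _) (by positivity))
  have hN' : (0 : ℝ) < N := by exact_mod_cast hN
  have hO0 : (0 : ℝ) < O := by exact_mod_cast (by omega : 0 < O)
  have hA1 : (0 : ℝ) < A - 1 := by linarith
  have hApos : (0 : ℝ) < A := by linarith
  have hcard : (S : ℝ) * A * H ≤ 24 * (2 ^ d * N * (A - 1)) :=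
    Hard.le_card (by linarith) hA0 (by exact_mod_cast hSd) (by exact_mod_cast hHN) (by positivity)
  set K : ℝ := 2 ^ d * N * (A - 1) with hK
  have hK0 : 0 < K := by positivity
  refine Hard.no_algorithm eO a₀ hk eS hε hε1 hα hα3 hαH (by simpa using hA) hN (by omega) hη
    (m := 3600 * (1 / 10 ^ 12) * Real.sqrt O / (α ^ 2 * ε ^ 2))
    (m' := 2400 * (1 / 10 ^ 12) / ε ^ 2) (T := T) (by positivity) (by positivity)
    (Hard.budget_signal hα hε hε1 hαH hH8 hk hOk) ?_ ?_ ?_ 𝔄 Z₀ μ₀ (hP _ (Set.mem_insert _ _))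
    fun θ μ => hP _ (Set.mem_insert_of_mem _ ⟨(θ, μ), rfl⟩)
  · have h1 : ε ^ 2 ≤ (1 / 100) ^ 2 := pow_le_pow_left₀ hε.le hε1 2
    have h2 : 1024 * ε ^ 2 * (2400 * (1 / 10 ^ 12) / ε ^ 2 + 1) =
        1024 * 2400 / 10 ^ 12 + 1024 * ε ^ 2 := by field_simp
    rw [h2]
    linarith
  · rw [Fintype.card_fin, ← hK, ← mul_div_assoc, div_le_iff₀ hK0]
    calc (T : ℝ) * (3 / 2) ≤
          1 / 10 ^ 12 * ((S : ℝ) * Real.sqrt O * A * H / (α ^ 2 * ε ^ 2)) * (3 / 2) := by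
            linarith
      _ = 1 / 10 ^ 12 * (Real.sqrt O / (α ^ 2 * ε ^ 2)) * (3 / 2) * (S * A * H) := by ring
      _ ≤ 1 / 10 ^ 12 * (Real.sqrt O / (α ^ 2 * ε ^ 2)) * (3 / 2) * (24 * K) :=
          mul_le_mul_of_nonneg_left hcard (by positivity)
      _ = _ := by ring
  · -- `A ^ (H / 2)` with real exponent is at most `A ^ (H - ⌊H / 2⌋)`.
    have hpow : (A : ℝ) ^ ((H : ℝ) / 2) ≤ (A : ℝ) ^ (H - H / 2) := by
      rw [← Real.rpow_natCast]
      apply Real.rpow_le_rpow_of_exponent_le (by linarith)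
      rw [div_le_iff₀ (by norm_num)]
      exact_mod_cast (by omega : H ≤ (H - H / 2) * 2)
    have hAA : (A : ℝ) ^ (H - H / 2) * (A : ℝ) ^ (H / 2) = A * (A : ℝ) ^ (H - 1) := by
      rw [← pow_add, ← pow_succ']
      congr 1
      omega
    rw [Fintype.card_fin, ← hK, hdN, ← mul_div_assoc, div_le_iff₀ (by positivity)]
    calc (T : ℝ) * (A : ℝ) ^ (H / 2) ≤
          1 / 10 ^ 12 * ((S : ℝ) * (A : ℝ) ^ (H - H / 2) * H / ε ^ 2) * (A : ℝ) ^ (H / 2) := by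
            refine mul_le_mul_of_nonneg_right (hT2.le.trans ?_) (by positivity)
            gcongr
      _ = 1 / 10 ^ 12 * (1 / ε ^ 2) * (S * H) *
            ((A : ℝ) ^ (H - H / 2) * (A : ℝ) ^ (H / 2)) := by ring
      _ = 1 / 10 ^ 12 * (1 / ε ^ 2) * (A : ℝ) ^ (H - 1) * (S * A * H) := by rw [hAA]; ring
      _ ≤ 1 / 10 ^ 12 * (1 / ε ^ 2) * (A : ℝ) ^ (H - 1) * (24 * K) :=
          mul_le_mul_of_nonneg_left hcard (by positivity)
      _ = _ := by ring
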